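/- Let (R,m) be a generalized Cohen-Macaulay local ring of dimension d and I an ideal generated by a standard system of parameters. Then for i = 0,1,...,d-1, the Hilbert coefficient satisfies e_{d-i}(I) = (-1)^{d-i} Σ_{j=0}^{i} C(i-1, j-1)·λ(Hʲ_m(R)). -/

import Mathlib

open IsLocalRing Filter Function CategoryTheory

universe u

section Defs

variable (R : Type u) [CommRing R]

/-- The length of a module, as the Krull dimension of its lattice of submodules. -/
noncomputable def mlen (M : Type u) [AddCommGroup M] [Module R M] : WithBot ℕ∞ :=
  Order.krullDim (Submodule R M)

/-- The (Krull) dimension of a module. -/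
noncomputable def mdim (M : Type u) [AddCommGroup M] [Module R M] : WithBot ℕ∞ :=
  ringKrullDim (R ⧸ Module.annihilator R M)

/-- The depth of `M` with respect to an ideal `I`: the supremum of the lengths of
`M`-regular sequences consisting of elements of `I`. -/
noncomputable def idepth (I : Ideal R) (M : Type u) [AddCommGroup M] [Module R M] : ℕ∞ :=
  sSup {n : ℕ∞ | ∃ rs : List R, (rs.length : ℕ∞) = n ∧ (∀ r ∈ rs, r ∈ I) ∧
    RingTheory.Sequence.IsRegular M rs}

/-- The depth of a module over a local ring. -/
noncomputable def mdepth [IsLocalRing R] (M : Type u) [AddCommGroup M] [Module R M] : ℕ∞ :=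
  idepth R (maximalIdeal R) M

/-- A Cohen–Macaulay module over a local ring: depth = dimension. -/
def IsCMMod [IsLocalRing R] (M : Type u) [AddCommGroup M] [Module R M] : Prop :=
  (mdepth R M : WithBot ℕ∞) = mdim R M

/-- A Cohen–Macaulay local ring. -/
def IsCMRing [IsLocalRing R] : Prop := (mdepth R R : WithBot ℕ∞) = ringKrullDim R

/-- A maximal Cohen–Macaulay module: finite with depth = dim R. -/
def IsMCMMod [IsLocalRing R] (M : Type u) [AddCommGroup M] [Module R M] : Prop :=
  Module.Finite R M ∧ (mdepth R M : WithBot ℕ∞) = ringKrullDim R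

/-- `H⁰_m(M)`: the submodule of elements killed by a power of the maximal ideal. -/
def H0 [IsLocalRing R] (M : Type u) [AddCommGroup M] [Module R M] : Submodule R M :=
  ⨆ n : ℕ, Submodule.torsionBySet R M ((maximalIdeal R ^ n : Ideal R) : Set R)

/-- The `i`-th local cohomology of `M` with support in the maximal ideal. -/
noncomputable def lcoh [IsLocalRing R] (i : ℕ) (M : Type u) [AddCommGroup M] [Module R M] :
    ModuleCat.{u} R :=
  (localCohomology (maximalIdeal R) i).obj (ModuleCat.of R M)

/-- The value at `n` of the Hilbert–Samuel polynomial in dimension `d` with coefficients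
`e 0, …, e d`:  `∑ (-1)^i eᵢ C(n+d-1-i, d-i)`. -/
def hsPoly (d : ℕ) (e : ℕ → ℤ) (n : ℕ) : ℤ :=
  ∑ i ∈ Finset.range (d + 1), (-1 : ℤ) ^ i * e i * ((n + d - 1 - i).choose (d - i) : ℤ)

/-- `I` is a parameter ideal for `M` of dimension `d`: generated by `d` elements with
`M/IM` of finite length. -/
def IsParameterIdeal [IsLocalRing R] (I : Ideal R) (d : ℕ) (M : Type u) [AddCommGroup M]
    [Module R M] : Prop :=
  (∃ a : Fin d → R, I = Ideal.span (Set.range a)) ∧ mlen R (M ⧸ (I • (⊤ : Submodule R M))) < ⊤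

/-- `ℓ` records the Hilbert–Samuel function of `I` on `M`:  `ℓ n = λ(M/IⁿM)`. -/
def IsHilbSeq (I : Ideal R) (M : Type u) [AddCommGroup M] [Module R M] (ℓ : ℕ → ℕ) : Prop :=
  ∀ n : ℕ, mlen R (M ⧸ (I ^ n • (⊤ : Submodule R M))) = ((ℓ n : ℕ∞) : WithBot ℕ∞)

/-- `e 0, …, e d` are the Hilbert coefficients of `I` on `M`: the Hilbert–Samuel function
eventually agrees with the Hilbert–Samuel polynomial with these coefficients. -/
def HasHilbCoeffs (I : Ideal R) (M : Type u) [AddCommGroup M] [Module R M] (d : ℕ)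
    (e : ℕ → ℤ) : Prop :=
  ∃ ℓ : ℕ → ℕ, IsHilbSeq R I M ℓ ∧ ∀ᶠ n in atTop, (ℓ n : ℤ) = hsPoly d e n

/-- A local ring is unmixed if every associated prime of its completion has
dimension equal to `dim R`. -/
def Unmixed [IsLocalRing R] : Prop :=
  ∀ p ∈ associatedPrimes (AdicCompletion (maximalIdeal R) R)
      (AdicCompletion (maximalIdeal R) R),
    ringKrullDim ((AdicCompletion (maximalIdeal R) R) ⧸ p) = ringKrullDim R

/-- The height of an ideal: the infimum of the heights of the primes containing it. -/
noncomputable def idealHeight (I : Ideal R) : ℕ∞ :=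
  ⨅ p ∈ {p : PrimeSpectrum R | I ≤ p.asIdeal}, Order.height p

/-- A regular local ring: the maximal ideal is generated by `dim R` elements. -/
def IsRegularLocal [IsLocalRing R] : Prop :=
  ∃ s : Finset R, Ideal.span (s : Set R) = maximalIdeal R ∧
    ((s.card : ℕ∞) : WithBot ℕ∞) = ringKrullDim R

end Defs
/-- The binomial coefficient `C(i-1, j-1)` with the conventions `C(-1,-1) = 1` and
`C(i-1,-1) = 0` for `i ≥ 1`, `C(-1,j-1) = 0` for `j ≥ 1`. -/
def bin (i j : ℕ) : ℕ :=
  if i = 0 then (if j = 0 then 1 else 0)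
  else if j = 0 then 0 else (i - 1).choose (j - 1)

/-!
Write `hⁱ(M)` for the length of `Hⁱ_m(M)`, let `q = (a₁, …, a_d)` be generated by parameters, and
put `a = a₁` and `M' = M/aM`, for a finite module `M`. The argument is an induction on `d`.

Since `hⁱ(M) < ∞` for `i < d`, the submodule `0 :_M a` lies in `H⁰_m(M)`, and the long exact
sequence of local cohomology gives `hⁱ(M') ≤ hⁱ(M) + hⁱ⁺¹(M)` for `i < d - 1`. On the other hand
`λ(M/qⁿ⁺¹M) - λ(M/qⁿM)` is at least `λ(M'/qⁿ⁺¹M')` up to an error of smaller order. By induction,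
`λ(M/qⁿM)` grows at least like a polynomial of degree `d` whose normalized leading coefficient is
`λ(M/qM) - ∑ C(d-1,i) hⁱ(M)`, which is therefore a lower bound for the multiplicity.

Standardness says that this bound is attained. Then every inequality used is an equality: `M'` is
again standard, `hⁱ(M') = hⁱ(M) + hⁱ⁺¹(M)`, and `a` kills `H⁰_m(M)`. As permuting the parameters
changes nothing, all of them kill `H⁰_m`, so that they form a d-sequence on `M` of a strong kind.
For such a sequence `(0 :_M a) ∩ qM = 0` and `qⁿ⁺¹M :_M a = qⁿM + (0 :_M a)`, which makes the
Hilbert–Samuel functions satisfy the exact recursion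
`λ(M/qⁿ⁺²M) + h⁰(M) = λ(M/qⁿ⁺¹M) + λ(M'/qⁿ⁺²M')`. Solving it determines all Hilbert coefficients.
-/

section ExactLength

variable {R A B C D : Type*} [Ring R] [AddCommGroup A] [Module R A] [AddCommGroup B] [Module R B]
  [AddCommGroup C] [Module R C] [AddCommGroup D] [Module R D]

lemma length_le_add_of_exact {f : A →ₗ[R] B} {g : B →ₗ[R] C} (hfg : Exact f g) :
    Module.length R B ≤ Module.length R A + Module.length R C := by
  have hker : Module.length R (LinearMap.ker g) ≤ Module.length R A := by
    rw [hfg.linearMap_ker_eq]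
    exact Module.length_le_of_surjective f.rangeRestrict f.surjective_rangeRestrict
  have hrange : Module.length R (LinearMap.range g) ≤ Module.length R C :=
    Module.length_le_of_injective _ (LinearMap.range g).subtype_injective
  rw [Module.length_eq_add_of_exact (LinearMap.ker g).subtype g.rangeRestrict
    (Submodule.subtype_injective _) g.surjective_rangeRestrict (by intro x; simp [Subtype.ext_iff])]
  exact add_le_add hker hrange

lemma length_add_le_of_exact_of_injective {f : A →ₗ[R] B} {g : B →ₗ[R] C} {δ : C →ₗ[R] D}
    (hf : Injective f) (hfg : Exact f g) (hgδ : Exact g δ) :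
    Module.length R C + Module.length R A ≤ Module.length R B + Module.length R D := by
  have hB : Module.length R B = Module.length R A + Module.length R (LinearMap.range g) :=
    Module.length_eq_add_of_exact f g.rangeRestrict hf g.surjective_rangeRestrict
      (fun x => by rw [← hfg x]; simp [Subtype.ext_iff])
  have hC : Module.length R C ≤ Module.length R (LinearMap.range g) + Module.length R D :=
    length_le_add_of_exact (f := (LinearMap.range g).subtype) (g := δ)
      (fun x => by rw [hgδ x]; simp)
  calc Module.length R C + Module.length R A
      ≤ Module.length R (LinearMap.range g) + Module.length R D + Module.length R A := by gcongr
    _ = Module.length R B + Module.length R D := by rw [hB]; ring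

end ExactLength

/-! ### Local cohomology as a direct limit of `Ext` -/

section ExtLimit

variable {R : Type u} [CommRing R] (J : Ideal R)

/-- The projection `R ⧸ J ^ l ⟶ R ⧸ J ^ k` for `k ≤ l`. -/
abbrev quotPowProj {k l : ℕ} (hkl : k ≤ l) :
    ModuleCat.of R (R ⧸ J ^ l) ⟶ ModuleCat.of R (R ⧸ J ^ k) :=
  ModuleCat.ofHom (Submodule.factor (Ideal.pow_le_pow_right hkl))

/-- The transition map `Ext^i(R ⧸ J ^ k, M) → Ext^i(R ⧸ J ^ l, M)`. -/
noncomputable def extTransition (i : ℕ) (M : ModuleCat.{u} R) (k l : ℕ) (hkl : k ≤ l) :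
    Abelian.Ext (ModuleCat.of R (R ⧸ J ^ k)) M i →ₗ[R]
      Abelian.Ext (ModuleCat.of R (R ⧸ J ^ l)) M i :=
  (Abelian.Ext.mk₀ (quotPowProj J hkl)).precompOfLinear R M (zero_add i)

variable {J} in
lemma extTransition_apply {i : ℕ} {M : ModuleCat.{u} R} {k l : ℕ} (hkl : k ≤ l)
    (x : Abelian.Ext (ModuleCat.of R (R ⧸ J ^ k)) M i) :
    extTransition J i M k l hkl x =
      (Abelian.Ext.mk₀ (quotPowProj J hkl)).comp x (zero_add i) := rfl

instance (i : ℕ) (M : ModuleCat.{u} R) :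
    DirectedSystem (fun k => Abelian.Ext (ModuleCat.of R (R ⧸ J ^ k)) M i)
      (fun k l hkl => extTransition J i M k l hkl) where
  map_self k x := by
    have hid : quotPowProj J le_rfl = 𝟙 (ModuleCat.of R (R ⧸ J ^ k)) :=
      ModuleCat.hom_ext (Submodule.linearMap_qext _ rfl)
    simp only [extTransition_apply, hid, Abelian.Ext.mk₀_id_comp]
  map_map k l n hkl hln x := by
    simp only [extTransition_apply]
    rw [← Abelian.Ext.comp_assoc (a₁₂ := 0) _ _ _ (by lia) (by lia) (by lia),
      Abelian.Ext.mk₀_comp_mk₀, ← ModuleCat.ofHom_comp, Submodule.factor_comp]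

/-- The direct limit of `Ext^i(R ⧸ J ^ k, M)` over `k`, a model of the local cohomology of `M` with
support in `J` for which the long exact sequences are available. -/
abbrev ExtLimit (i : ℕ) (M : ModuleCat.{u} R) : Type u :=
  Module.DirectLimit (fun k => Abelian.Ext (ModuleCat.of R (R ⧸ J ^ k)) M i) (extTransition J i M)

namespace ExtLimit

/-- The structure map of the direct limit. -/
noncomputable abbrev of (i : ℕ) (M : ModuleCat.{u} R) (k : ℕ) :
    Abelian.Ext (ModuleCat.of R (R ⧸ J ^ k)) M i →ₗ[R] ExtLimit J i M :=
  Module.DirectLimit.of R ℕ (fun k => Abelian.Ext (ModuleCat.of R (R ⧸ J ^ k)) M i)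
    (extTransition J i M) k

/-- The map induced on the limit by the Yoneda product with an `Ext` class. -/
noncomputable def map {M N : ModuleCat.{u} R} {n i j : ℕ} (α : Abelian.Ext M N n)
    (hij : i + n = j) : ExtLimit J i M →ₗ[R] ExtLimit J j N :=
  Module.DirectLimit.map (fun k => α.postcompOfLinear R (ModuleCat.of R (R ⧸ J ^ k)) hij)
    (fun _ _ _ => LinearMap.ext fun _ =>
      Abelian.Ext.comp_assoc (a₁₂ := i) (a₂₃ := j) _ _ _ (by lia) (by lia) (by lia))

variable {J}

lemma of_extTransition {i : ℕ} {M : ModuleCat.{u} R} {k l : ℕ} (hkl : k ≤ l)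
    (x : Abelian.Ext (ModuleCat.of R (R ⧸ J ^ k)) M i) :
    of J i M l (extTransition J i M k l hkl x) = of J i M k x :=
  Module.DirectLimit.of_f

lemma map_of {M N : ModuleCat.{u} R} {n i j : ℕ} (α : Abelian.Ext M N n) (hij : i + n = j) (k : ℕ)
    (x : Abelian.Ext (ModuleCat.of R (R ⧸ J ^ k)) M i) :
    map J α hij (of J i M k x) = of J j N k (x.comp α hij) :=
  Module.DirectLimit.map_apply_of _ _ _

lemma exists_of_comp_eq_zero {M N : ModuleCat.{u} R} {n i j : ℕ} {α : Abelian.Ext M N n}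
    {hij : i + n = j} {z : ExtLimit J i M} (hz : map J α hij z = 0) :
    ∃ k x, of J i M k x = z ∧ x.comp α hij = 0 := by
  obtain ⟨k, x, rfl⟩ := Module.DirectLimit.exists_of z
  rw [map_of] at hz
  obtain ⟨l, hkl, hl⟩ := Module.DirectLimit.of.zero_exact hz
  refine ⟨l, extTransition J i M k l hkl x, of_extTransition hkl x, ?_⟩
  rwa [extTransition_apply, ← Abelian.Ext.comp_assoc (a₁₂ := i) _ _ _ (by lia) (by lia) (by lia)]
    at hl

lemma map_map_eq_zero {M N P : ModuleCat.{u} R} {a b i j k c : ℕ} {α : Abelian.Ext M N a}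
    {β : Abelian.Ext N P b} (hc : a + b = c) (hαβ : α.comp β hc = 0) (hij : i + a = j)
    (hjk : j + b = k) (z : ExtLimit J i M) : map J β hjk (map J α hij z) = 0 := by
  obtain ⟨l, x, rfl⟩ := Module.DirectLimit.exists_of z
  rw [map_of, map_of, Abelian.Ext.comp_assoc (a₂₃ := c) _ _ _ hij hc (by lia), hαβ,
    Abelian.Ext.comp_zero, map_zero]

variable {S : ShortComplex (ModuleCat.{u} R)} (hS : S.ShortExact)

include hS in
lemma exact₂ (i : ℕ) :
    Exact (map J (Abelian.Ext.mk₀ S.f) (add_zero i))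
      (map J (Abelian.Ext.mk₀ S.g) (add_zero i)) := by
  refine fun z => ⟨fun hz => ?_, ?_⟩
  · obtain ⟨k, x, rfl, hx⟩ := exists_of_comp_eq_zero hz
    obtain ⟨y, rfl⟩ := Abelian.Ext.covariant_sequence_exact₂ _ hS _ hx
    exact ⟨of J i _ k y, map_of _ _ _ _⟩
  · rintro ⟨y, rfl⟩
    exact map_map_eq_zero (add_zero 0) (by simp) _ _ y

lemma exact₃ (i : ℕ) :
    Exact (map J (Abelian.Ext.mk₀ S.g) (add_zero i)) (map J hS.extClass (rfl : i + 1 = i + 1)) := by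
  refine fun z => ⟨fun hz => ?_, ?_⟩
  · obtain ⟨k, x, rfl, hx⟩ := exists_of_comp_eq_zero hz
    obtain ⟨y, rfl⟩ := Abelian.Ext.covariant_sequence_exact₃ _ hS _ rfl hx
    exact ⟨of J i _ k y, map_of _ _ _ _⟩
  · rintro ⟨y, rfl⟩
    exact map_map_eq_zero (zero_add 1) hS.comp_extClass _ _ y

include hS in
lemma map_zero_injective : Injective (map J (Abelian.Ext.mk₀ S.f) (add_zero 0)) := by
  refine (injective_iff_map_eq_zero _).2 fun z hz => ?_
  obtain ⟨k, x, rfl, hx⟩ := exists_of_comp_eq_zero hz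
  have := hS.mono_f
  have hinj := Abelian.Ext.postcomp_mk₀_injective_of_mono (ModuleCat.of R (R ⧸ J ^ k)) S.f
  rw [show x = 0 from hinj (by simpa using hx), map_zero]

end ExtLimit

/-- The length of the `i`-th local cohomology of `M` with support in `J`, computed in the model
`ExtLimit`. -/
noncomputable def lcLength (i : ℕ) (M : Type u) [AddCommGroup M] [Module R M] : ℕ∞ :=
  Module.length R (ExtLimit J i (ModuleCat.of R M))

section

variable {A B : Type u} [AddCommGroup A] [Module R A] [AddCommGroup B] [Module R B] {g : A →ₗ[R] B}
  (hg : Surjective g)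

include hg

lemma lcLength_le_add_ker (i : ℕ) :
    lcLength J i B ≤ lcLength J i A + lcLength J (i + 1) (LinearMap.ker g) :=
  length_le_add_of_exact (ExtLimit.exact₃ (LinearMap.shortExact_shortComplexKer hg) i)

lemma lcLength_zero_add_ker_le :
    lcLength J 0 B + lcLength J 0 (LinearMap.ker g) ≤
      lcLength J 0 A + lcLength J 1 (LinearMap.ker g) := by
  have hS := LinearMap.shortExact_shortComplexKer hg
  have hlen := length_add_le_of_exact_of_injective (ExtLimit.map_zero_injective (J := J) hS)
    (ExtLimit.exact₂ hS 0) (ExtLimit.exact₃ hS 0)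
  exact hlen

end

end ExtLimit

/-! ### Vanishing on torsion modules -/

section TorsionVanishing

variable {R : Type u} [CommRing R]

lemma exists_extClass_comp_eq {S : ShortComplex (ModuleCat.{u} R)} (hS : S.ShortExact)
    [Projective S.X₂] {N : ModuleCat.{u} R} {i : ℕ} (ξ : Abelian.Ext S.X₃ N (i + 1)) :
    ∃ η : Abelian.Ext S.X₁ N i, hS.extClass.comp η (add_comm 1 i) = ξ :=
  Abelian.Ext.contravariant_sequence_exact₃ hS N ξ (Abelian.Ext.eq_zero_of_projective _)
    (add_comm 1 i)

lemma mk₀_comp_extClass_comp_eq_zero {S S' : ShortComplex (ModuleCat.{u} R)} (hS : S.ShortExact)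
    (hS' : S'.ShortExact) (φ : S' ⟶ S) {N : ModuleCat.{u} R} {i : ℕ} {η : Abelian.Ext S.X₁ N i}
    (hη : (Abelian.Ext.mk₀ φ.τ₁).comp η (zero_add i) = 0) :
    (Abelian.Ext.mk₀ φ.τ₃).comp (hS.extClass.comp η (add_comm 1 i)) (zero_add (i + 1)) = 0 := by
  rw [← Abelian.Ext.comp_assoc (a₁₂ := 1) _ _ _ (by lia) (by lia) (by lia),
    ← ShortComplex.ShortExact.extClass_naturality hS' hS φ,
    Abelian.Ext.comp_assoc (a₂₃ := i) _ _ _ (by lia) (by lia) (by lia), hη,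
    Abelian.Ext.comp_zero]

lemma mk₀_comp_eq_zero_of_forall_mem {A B : Type u} [AddCommGroup A] [Module R A] [AddCommGroup B]
    [Module R B] {P : Submodule R A} {N : ModuleCat.{u} R} {i : ℕ}
    {ξ : Abelian.Ext (ModuleCat.of R A) N i}
    (hξ : (Abelian.Ext.mk₀ (ModuleCat.ofHom P.subtype)).comp ξ (zero_add i) = 0) (φ : B →ₗ[R] A)
    (hφ : ∀ b, φ b ∈ P) :
    (Abelian.Ext.mk₀ (ModuleCat.ofHom φ)).comp ξ (zero_add i) = 0 := by
  have hfactor : ModuleCat.ofHom φ =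
      ModuleCat.ofHom (φ.codRestrict P hφ) ≫ ModuleCat.ofHom P.subtype := rfl
  rw [hfactor, ← Abelian.Ext.mk₀_comp_mk₀,
    Abelian.Ext.comp_assoc (a₂₃ := i) _ _ _ (by lia) (by lia) (by lia), hξ, Abelian.Ext.comp_zero]

lemma mk₀_comp_extClass_comp_eq_zero_of_map_ker_le {F F' A A' : Type u} [AddCommGroup F]
    [Module R F] [AddCommGroup F'] [Module R F'] [AddCommGroup A] [Module R A] [AddCommGroup A']
    [Module R A'] {g : F →ₗ[R] A} {g' : F' →ₗ[R] A'} (hg : Surjective g) (hg' : Surjective g')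
    {α : F' →ₗ[R] F} {β : A' →ₗ[R] A} (hαβ : g ∘ₗ α = β ∘ₗ g') {I : Ideal R} {N : ModuleCat.{u} R}
    {i : ℕ} {η : Abelian.Ext (ModuleCat.of R (LinearMap.ker g)) N i}
    (hη : (Abelian.Ext.mk₀ (ModuleCat.ofHom (I • ⊤ : Submodule R (LinearMap.ker g)).subtype)).comp η
      (zero_add i) = 0)
    (hα : (LinearMap.ker g').map α ≤ I • LinearMap.ker g) :
    (Abelian.Ext.mk₀ (ModuleCat.ofHom β)).comp
      ((LinearMap.shortExact_shortComplexKer hg).extClass.comp η (add_comm 1 i))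
      (zero_add (i + 1)) = 0 := by
  have hmem (x : LinearMap.ker g') : α x ∈ I • LinearMap.ker g :=
    hα (Submodule.mem_map_of_mem x.2)
  let kerMap : LinearMap.ker g' →ₗ[R] LinearMap.ker g :=
    (α ∘ₗ Submodule.subtype _).codRestrict _ fun x => Submodule.smul_le_right (hmem x)
  let φ : g'.shortComplexKer ⟶ g.shortComplexKer :=
    { τ₁ := ModuleCat.ofHom kerMap
      τ₂ := ModuleCat.ofHom α
      τ₃ := ModuleCat.ofHom β
      comm₁₂ := rfl
      comm₂₃ := ModuleCat.hom_ext hαβ }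
  exact mk₀_comp_extClass_comp_eq_zero (LinearMap.shortExact_shortComplexKer hg)
    (LinearMap.shortExact_shortComplexKer hg') φ (mk₀_comp_eq_zero_of_forall_mem hη kerMap
      fun x => (Submodule.mem_smul_top_iff _ _ _).2 (hmem x))

variable [IsNoetherianRing R]

lemma exists_pow_smul_top_inf_le {A : Type*} [AddCommGroup A] [Module R A] [Module.Finite R A]
    (J : Ideal R) (K : Submodule R A) (n : ℕ) :
    ∃ m, (J ^ m • ⊤ : Submodule R A) ⊓ K ≤ J ^ n • K := by
  obtain ⟨k, hk⟩ := Ideal.exists_pow_inf_eq_pow_smul J K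
  refine ⟨n + k, ?_⟩
  rw [hk (n + k) (by lia), Nat.add_sub_cancel]
  exact Submodule.smul_mono le_rfl inf_le_right

variable {J : Ideal R} {N : Type u} [AddCommGroup N] [Module R N] {c : ℕ}
  (hN : J ^ c ≤ Module.annihilator R N)

include hN

-- Dimension shifting along a free cover; Artin-Rees controls the kernel of `J ^ m F → J ^ m A`.
lemma exists_mk₀_subtype_pow_smul_comp_eq_zero (i : ℕ) (A : Type u) [AddCommGroup A] [Module R A]
    [Module.Finite R A] (ξ : Abelian.Ext (ModuleCat.of R A) (ModuleCat.of R N) i) :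
    ∃ n, (Abelian.Ext.mk₀ (ModuleCat.ofHom (J ^ n • ⊤ : Submodule R A).subtype)).comp ξ
      (zero_add i) = 0 := by
  induction i generalizing A with
  | zero =>
    obtain ⟨f, rfl⟩ := (Abelian.Ext.mk₀_bijective _ _).2 ξ
    have hker : J ^ c • ⊤ ≤ LinearMap.ker f.hom := by
      refine Submodule.smul_le.2 fun r hr x _ => ?_
      rw [LinearMap.mem_ker, map_smul]
      exact Module.mem_annihilator.1 (hN hr) _
    have hzero : ModuleCat.ofHom (J ^ c • ⊤ : Submodule R A).subtype ≫ f = 0 :=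
      ModuleCat.hom_ext (LinearMap.ext fun b => hker b.2)
    exact ⟨c, by rw [Abelian.Ext.mk₀_comp_mk₀, hzero, Abelian.Ext.mk₀_zero]⟩
  | succ i ih =>
    obtain ⟨r, g, hg⟩ := Module.Finite.exists_fin' R A
    have : Projective g.shortComplexKer.X₂ :=
      (IsProjective.iff_projective (Fin r → R)).1 inferInstance
    obtain ⟨η, rfl⟩ := exists_extClass_comp_eq (LinearMap.shortExact_shortComplexKer hg) ξ
    obtain ⟨n, hn⟩ := ih (LinearMap.ker g) η
    obtain ⟨m, hm⟩ := exists_pow_smul_top_inf_le J (LinearMap.ker g) n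
    have hmap : (J ^ m • ⊤ : Submodule R (Fin r → R)).map g = J ^ m • ⊤ := by
      rw [Submodule.map_smul'', Submodule.map_top, LinearMap.range_eq_top.2 hg]
    let g' : (J ^ m • ⊤ : Submodule R (Fin r → R)) →ₗ[R] (J ^ m • ⊤ : Submodule R A) :=
      g.restrict fun x hx => hmap ▸ Submodule.mem_map_of_mem hx
    have hg' : Surjective g' := fun ⟨y, hy⟩ =>
      have ⟨x, hx, hxy⟩ := hmap.ge hy
      ⟨⟨x, hx⟩, Subtype.ext hxy⟩
    refine ⟨m, mk₀_comp_extClass_comp_eq_zero_of_map_ker_le hg hg'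
      (α := Submodule.subtype _) rfl hn ?_⟩
    rintro _ ⟨x, hx, rfl⟩
    exact hm ⟨x.2, congrArg Subtype.val hx⟩

theorem lcLength_succ_eq_zero (i : ℕ) : lcLength J (i + 1) N = 0 := by
  rw [lcLength, Module.length_eq_zero_iff]
  refine subsingleton_of_forall_eq 0 fun z => ?_
  obtain ⟨k, ξ, rfl⟩ := Module.DirectLimit.exists_of z
  have hsurj (l : ℕ) := Submodule.mkQ_surjective (J ^ l)
  have : Projective (Submodule.mkQ (J ^ k)).shortComplexKer.X₂ :=
    (IsProjective.iff_projective R).1 inferInstance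
  obtain ⟨η, hη⟩ := exists_extClass_comp_eq (LinearMap.shortExact_shortComplexKer (hsurj k)) ξ
  obtain ⟨n, hn⟩ := exists_mk₀_subtype_pow_smul_comp_eq_zero hN i _ η
  have hker : (LinearMap.ker (J ^ (n + k)).mkQ).map LinearMap.id ≤
      J ^ n • LinearMap.ker (J ^ k).mkQ := by
    rw [Submodule.map_id, Submodule.ker_mkQ, Submodule.ker_mkQ, smul_eq_mul, pow_add]
  have hzero : extTransition J (i + 1) _ k (n + k) (Nat.le_add_left k n) ξ = 0 := by
    rw [extTransition_apply, ← hη]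
    exact mk₀_comp_extClass_comp_eq_zero_of_map_ker_le (hsurj k) (hsurj (n + k)) rfl hn hker
  rw [← ExtLimit.of_extTransition (Nat.le_add_left k n), hzero, map_zero]

end TorsionVanishing

section DegreeZero

variable {R : Type u} [CommRing R] (J : Ideal R) (M : Type u) [AddCommGroup M] [Module R M]

/-- The map `Ext^0(R ⧸ J ^ k, M) = Hom(R ⧸ J ^ k, M) → M` evaluating a homomorphism at `1`. -/
noncomputable def evalOne (k : ℕ) :
    Abelian.Ext (ModuleCat.of R (R ⧸ J ^ k)) (ModuleCat.of R M) 0 →ₗ[R] M where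
  toFun x := (Abelian.Ext.linearEquiv₀ (R := R) x).hom (Submodule.Quotient.mk (1 : R))
  map_add' x y := by rw [map_add]; rfl
  map_smul' r x := by rw [map_smul]; rfl

lemma evalOne_mk₀ (k : ℕ) (f : ModuleCat.of R (R ⧸ J ^ k) ⟶ ModuleCat.of R M) :
    evalOne J M k (Abelian.Ext.mk₀ f) = f.hom (Submodule.Quotient.mk (1 : R)) :=
  congrArg (fun φ => φ.hom (Submodule.Quotient.mk (1 : R)))
    (Abelian.Ext.homEquiv₀.apply_symm_apply f)

/-- The map from the degree zero limit to `M` induced by evaluation at `1`. -/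
noncomputable def evalOneLimit : ExtLimit J 0 (ModuleCat.of R M) →ₗ[R] M :=
  Module.DirectLimit.lift R ℕ _ _ (evalOne J M) (by
    intro k l hkl x
    obtain ⟨f, rfl⟩ := (Abelian.Ext.mk₀_bijective _ _).2 x
    rw [extTransition_apply, Abelian.Ext.mk₀_comp_mk₀, evalOne_mk₀, evalOne_mk₀]
    rfl)

lemma exists_of_mk₀ (z : ExtLimit J 0 (ModuleCat.of R M)) :
    ∃ k f, ExtLimit.of J 0 _ k (Abelian.Ext.mk₀ f) = z := by
  obtain ⟨k, x, rfl⟩ := Module.DirectLimit.exists_of z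
  obtain ⟨f, rfl⟩ := (Abelian.Ext.mk₀_bijective _ _).2 x
  exact ⟨k, f, rfl⟩

lemma evalOneLimit_of_mk₀ (k : ℕ) (f : ModuleCat.of R (R ⧸ J ^ k) ⟶ ModuleCat.of R M) :
    evalOneLimit J M (ExtLimit.of J 0 _ k (Abelian.Ext.mk₀ f)) =
      f.hom (Submodule.Quotient.mk (1 : R)) := by
  rw [← evalOne_mk₀]
  exact Module.DirectLimit.lift_of _ _ _

lemma evalOneLimit_injective : Injective (evalOneLimit J M) := by
  refine (injective_iff_map_eq_zero _).2 fun z hz => ?_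
  obtain ⟨k, f, rfl⟩ := exists_of_mk₀ J M z
  rw [evalOneLimit_of_mk₀] at hz
  have hf : f = 0 :=
    ModuleCat.hom_ext (Submodule.linearMap_qext _ (LinearMap.ext_ring hz))
  rw [hf, Abelian.Ext.mk₀_zero, map_zero]

lemma mem_iSup_torsionBySet_pow {x : M} :
    x ∈ ⨆ n : ℕ, Submodule.torsionBySet R M ((J ^ n : Ideal R) : Set R) ↔
      ∃ n, ∀ r ∈ J ^ n, r • x = 0 := by
  rw [Submodule.mem_iSup_of_directed _ (Monotone.directed_le fun _ _ hkl =>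
    Submodule.torsionBySet_le_torsionBySet_of_subset (Ideal.pow_le_pow_right hkl))]
  simp [Submodule.mem_torsionBySet_iff]

lemma range_evalOneLimit :
    LinearMap.range (evalOneLimit J M) =
      ⨆ n : ℕ, Submodule.torsionBySet R M ((J ^ n : Ideal R) : Set R) := by
  ext x
  rw [mem_iSup_torsionBySet_pow]
  constructor
  · rintro ⟨z, rfl⟩
    obtain ⟨k, f, rfl⟩ := exists_of_mk₀ J M z
    refine ⟨k, fun r hr => ?_⟩
    have hone : r • (Submodule.Quotient.mk (1 : R) : R ⧸ J ^ k) = 0 := by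
      rw [← Submodule.Quotient.mk_smul, smul_eq_mul, mul_one]
      exact (Submodule.Quotient.mk_eq_zero _).2 hr
    rw [evalOneLimit_of_mk₀]
    exact (f.hom.map_smul _ _).symm.trans ((congrArg f.hom hone).trans (map_zero _))
  · rintro ⟨n, hn⟩
    let f := Submodule.liftQ (J ^ n) (LinearMap.toSpanSingleton R M x) (fun r hr => hn r hr)
    exact ⟨ExtLimit.of J 0 _ n (Abelian.Ext.mk₀ (ModuleCat.ofHom f)),
      (evalOneLimit_of_mk₀ J M n _).trans (one_smul R x)⟩

theorem lcLength_zero :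
    lcLength J 0 M =
      Module.length R ↥(⨆ n : ℕ, Submodule.torsionBySet R M ((J ^ n : Ideal R) : Set R)) := by
  rw [lcLength, ← range_evalOneLimit]
  exact (LinearEquiv.ofInjective _ (evalOneLimit_injective J M)).length_eq

end DegreeZero

/-! ### Comparison of the two definitions of `Ext` -/

section ExtComparison

lemma extMk_eq_zero_iff_exists {C : Type*} [Category C] [Abelian C] [HasExt.{u} C] {X Y : C}
    (P : ProjectiveResolution X) (n : ℕ) (f : P.complex.X n ⟶ Y)
    (hf : P.complex.d (n + 1) n ≫ f = 0) :
    P.extMk f (n + 1) rfl hf = 0 ↔ ∃ g, P.complex.d n ((ComplexShape.down ℕ).next n) ≫ g = f := by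
  rcases n with _ | n
  · rw [P.complex.shape 0 _ (by simp)]
    simp only [Limits.zero_comp]
    refine ⟨fun h => ?_, ?_⟩
    · simp only [← P.extEquivCohomologyClass.apply_eq_iff_eq,
        ProjectiveResolution.extEquivCohomologyClass_extMk,
        ProjectiveResolution.extEquivCohomologyClass_zero,
        CochainComplex.HomComplex.CohomologyClass.mk_eq_zero_iff] at h
      rw [CochainComplex.HomComplex.Cocycle.toSingleMk_mem_coboundaries_iff _ _ _ _ _ 1
        (by simp)] at h
      obtain ⟨g, hg⟩ := h
      have hd : P.cochainComplex.d (-((0 : ℕ) : ℤ)) 1 = 0 :=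
        (P.cochainComplex.isZero_of_isStrictlyLE 0 1).eq_of_tgt _ _
      rw [hd, Limits.zero_comp] at hg
      refine ⟨0, ?_⟩
      rw [← cancel_epi (P.cochainComplexXIso (-((0 : ℕ) : ℤ)) 0 rfl).hom, ← hg, Limits.comp_zero]
    · rintro ⟨-, rfl⟩
      simp
  · rw [(ComplexShape.down ℕ).next_eq' (show (ComplexShape.down ℕ).Rel (n + 1) n by simp)]
    exact P.extMk_eq_zero_iff f _ _ hf n rfl

variable {R : Type u} [CommRing R]

/-- The functor `Hom(-, Y)`, viewed as a covariant functor to the opposite category; its left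
derived functors are by definition the functors `Ext R (ModuleCat R) n` in the first argument. -/
noncomputable abbrev homFunctor (Y : ModuleCat.{u} R) : ModuleCat.{u} R ⥤ (ModuleCat.{u} R)ᵒᵖ :=
  ((linearYoneda R (ModuleCat.{u} R)).obj Y).rightOp

/-- The cochain complex `Hom(P, Y)`, viewed as a chain complex in the opposite category. -/
noncomputable abbrev homComplex {X : ModuleCat.{u} R} (P : ProjectiveResolution X)
    (Y : ModuleCat.{u} R) : ChainComplex (ModuleCat.{u} R)ᵒᵖ ℕ :=
  ((homFunctor Y).mapHomologicalComplex _).obj P.complex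

/-- `Ext^n(X, Y)` defined through left derived functors, as opposed to `Abelian.Ext X Y n`. -/
noncomputable abbrev derivedExt (X Y : ModuleCat.{u} R) (n : ℕ) : ModuleCat.{u} R :=
  ((Ext R (ModuleCat.{u} R) n).obj (Opposite.op X)).obj Y

variable {X : ModuleCat.{u} R} (P : ProjectiveResolution X) (Y : ModuleCat.{u} R) (n : ℕ)

/-- The module of `n`-cocycles of `Hom(P, Y)`. -/
noncomputable abbrev homCocycles : ModuleCat.{u} R := ((homComplex P Y).opcycles n).unop

/-- The inclusion of the `n`-cocycles in `Hom(P_n, Y)`. -/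
noncomputable def cocycleHom : homCocycles P Y n →ₗ[R] (P.complex.X n ⟶ Y) :=
  ((homComplex P Y).pOpcycles n).unop.hom

lemma d_comp_cocycleHom (z : homCocycles P Y n) :
    P.complex.d (n + 1) n ≫ cocycleHom P Y n z = 0 :=
  congrArg (fun φ => φ.unop.hom z) ((homComplex P Y).d_pOpcycles (n + 1) n)

lemma cocycleHom_injective : Injective (cocycleHom P Y n) :=
  (ModuleCat.mono_iff_injective _).1 (inferInstanceAs (Mono ((homComplex P Y).pOpcycles n).unop))

lemma exists_cocycleHom_eq {f : P.complex.X n ⟶ Y} (hf : P.complex.d (n + 1) n ≫ f = 0) :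
    ∃ z, cocycleHom P Y n z = f := by
  let j : ModuleCat.of R R ⟶ ((homComplex P Y).X n).unop :=
    ModuleCat.ofHom (LinearMap.toSpanSingleton R (P.complex.X n ⟶ Y) f)
  have hj : (homComplex P Y).d (n + 1) n ≫ j.op = 0 :=
    Quiver.Hom.unop_inj (ModuleCat.hom_ext (LinearMap.ext fun (r : R) => by
      change P.complex.d (n + 1) n ≫ (r • f) = 0
      rw [Linear.comp_smul, hf, smul_zero]))
  exact ⟨((homComplex P Y).descOpcycles j.op (n + 1) (by simp) hj).unop.hom (1 : R),
    (congrArg (fun φ => φ.unop.hom (1 : R))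
      ((homComplex P Y).p_descOpcycles j.op (n + 1) (by simp) hj)).trans (one_smul R f)⟩

/-- `ProjectiveResolution.isoLeftDerivedObj`, with the homology of `homComplex P Y` as target. -/
noncomputable def leftDerivedIso :
    ((homFunctor Y).leftDerived n).obj X ≅ (homComplex P Y).homology n :=
  P.isoLeftDerivedObj (homFunctor Y) n

lemma leftDerivedIso_naturality {X' : ModuleCat.{u} R} (P' : ProjectiveResolution X')
    {g : X' ⟶ X} (φ : ProjectiveResolution.Hom P' P g) :
    ((homFunctor Y).leftDerived n).map g ≫ (leftDerivedIso P Y n).hom =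
      (leftDerivedIso P' Y n).hom ≫ HomologicalComplex.homologyMap
        (show homComplex P' Y ⟶ homComplex P Y from
          ((homFunctor Y).mapHomologicalComplex _).map φ.hom) n :=
  ProjectiveResolution.isoLeftDerivedObj_hom_naturality g P' P φ.hom
    φ.hom_f_zero_comp_π_f_zero (homFunctor Y) n

/-- The morphism, in the opposite category, dual to the map from cocycles to `derivedExt`. -/
noncomputable def derivedExtToOpcycles :
    ((homFunctor Y).leftDerived n).obj X ⟶ (homComplex P Y).opcycles n :=
  (leftDerivedIso P Y n).hom ≫ (homComplex P Y).homologyι n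

lemma derivedExtToOpcycles_naturality {X' : ModuleCat.{u} R} (P' : ProjectiveResolution X')
    {g : X' ⟶ X} (φ : ProjectiveResolution.Hom P' P g) :
    ((homFunctor Y).leftDerived n).map g ≫ derivedExtToOpcycles P Y n =
      derivedExtToOpcycles P' Y n ≫ HomologicalComplex.opcyclesMap
        (show homComplex P' Y ⟶ homComplex P Y from
          ((homFunctor Y).mapHomologicalComplex _).map φ.hom) n := by
  rw [derivedExtToOpcycles, derivedExtToOpcycles, ← Category.assoc,
    leftDerivedIso_naturality P Y n P' φ, Category.assoc, Category.assoc]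
  exact congrArg _ (HomologicalComplex.homologyι_naturality _ n)

/-- The cohomology class in `derivedExt` of a cocycle. -/
noncomputable def toDerivedExt : homCocycles P Y n →ₗ[R] derivedExt X Y n :=
  (derivedExtToOpcycles P Y n).unop.hom

lemma toDerivedExt_surjective : Surjective (toDerivedExt P Y n) :=
  have : Mono (derivedExtToOpcycles P Y n) := mono_comp _ _
  (ModuleCat.epi_iff_surjective _).1 (inferInstanceAs (Epi (derivedExtToOpcycles P Y n).unop))

lemma toDerivedExt_eq_zero_iff (z : homCocycles P Y n) :
    toDerivedExt P Y n z = 0 ↔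
      ∃ g, P.complex.d n ((ComplexShape.down ℕ).next n) ≫ g = cocycleHom P Y n z := by
  set j := (ComplexShape.down ℕ).next n with hj
  let S : ShortComplex (ModuleCat.{u} R)ᵒᵖ := ShortComplex.mk (derivedExtToOpcycles P Y n)
    ((homComplex P Y).fromOpcycles n j) (by simp [derivedExtToOpcycles])
  have hS : S.Exact := by
    have hker : (ShortComplex.mk _ _ ((homComplex P Y).homologyι_comp_fromOpcycles n j)).Exact :=
      ShortComplex.exact_of_f_is_kernel _ ((homComplex P Y).homologyIsKernel n j hj.symm)
    refine (ShortComplex.exact_iff_of_iso ?_).2 hker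
    exact ShortComplex.isoMk (leftDerivedIso P Y n) (Iso.refl _) (Iso.refl _)
      (by simp [S, derivedExtToOpcycles]) (by simp [S])
  have hd (g : P.complex.X j ⟶ Y) :
      cocycleHom P Y n (((homComplex P Y).fromOpcycles n j).unop.hom g) = P.complex.d n j ≫ g :=
    congrArg (fun φ => φ.unop.hom g) ((homComplex P Y).p_fromOpcycles n j)
  constructor
  · intro hz
    obtain ⟨g, hg⟩ := (ShortComplex.moduleCat_exact_iff _).1 hS.unop z hz
    exact ⟨g, (hd g).symm.trans (congrArg _ hg)⟩
  · rintro ⟨g, hg⟩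
    rw [← hd] at hg
    rw [← cocycleHom_injective P Y n hg]
    exact congrArg (fun φ => φ.unop.hom g) S.zero

/-- The cohomology class in `Abelian.Ext` of a cocycle. -/
noncomputable def toExt : homCocycles P Y n →ₗ[R] Abelian.Ext X Y n where
  toFun z := P.extMk (cocycleHom P Y n z) (n + 1) rfl (d_comp_cocycleHom P Y n z)
  map_add' x y := by
    rw [P.add_extMk]
    simp only [map_add]
  map_smul' r x := by
    rw [RingHom.id_apply, Abelian.Ext.smul_eq_comp_mk₀, P.extMk_comp_mk₀]
    congr 1
    rw [map_smul]
    simp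

lemma toExt_surjective : Surjective (toExt P Y n) := by
  intro ξ
  obtain ⟨f, hf, rfl⟩ := P.extMk_surjective ξ (n + 1) rfl
  obtain ⟨z, rfl⟩ := exists_cocycleHom_eq P Y n hf
  exact ⟨z, rfl⟩

lemma ker_toDerivedExt_eq_ker_toExt :
    LinearMap.ker (toDerivedExt P Y n) = LinearMap.ker (toExt P Y n) := by
  ext z
  rw [LinearMap.mem_ker, LinearMap.mem_ker, toDerivedExt_eq_zero_iff]
  exact (extMk_eq_zero_iff_exists P n _ (d_comp_cocycleHom P Y n z)).symm

/-- The isomorphism between the two versions of `Ext`: both are the cocycles of `Hom(P, Y)` modulo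
the coboundaries. -/
noncomputable def derivedExtEquiv : derivedExt X Y n ≃ₗ[R] Abelian.Ext X Y n :=
  ((toDerivedExt P Y n).quotKerEquivOfSurjective (toDerivedExt_surjective P Y n)).symm.trans
    ((Submodule.quotEquivOfEq _ _ (ker_toDerivedExt_eq_ker_toExt P Y n)).trans
      ((toExt P Y n).quotKerEquivOfSurjective (toExt_surjective P Y n)))

lemma derivedExtEquiv_toDerivedExt (z : homCocycles P Y n) :
    derivedExtEquiv P Y n (toDerivedExt P Y n z) = toExt P Y n z := by
  have hmk : ((toDerivedExt P Y n).quotKerEquivOfSurjective (toDerivedExt_surjective P Y n)).symm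
      (toDerivedExt P Y n z) = Submodule.Quotient.mk z := by
    rw [LinearEquiv.symm_apply_eq]
    rfl
  simp only [derivedExtEquiv, LinearEquiv.trans_apply]
  rw [hmk]
  rfl

lemma derivedExtEquiv_map {X' : ModuleCat.{u} R} (P' : ProjectiveResolution X') (g : X' ⟶ X)
    (w : derivedExt X Y n) :
    derivedExtEquiv P' Y n ((((Ext R (ModuleCat.{u} R) n).map g.op).app Y).hom w) =
      (Abelian.Ext.mk₀ g).comp (derivedExtEquiv P Y n w) (zero_add n) := by
  obtain ⟨z, rfl⟩ := toDerivedExt_surjective P Y n w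
  let φ : ProjectiveResolution.Hom P' P g :=
    { hom := ProjectiveResolution.lift g P' P
      hom_f_zero_comp_π_f_zero := by exact ProjectiveResolution.lift_commutes_zero g P' P }
  let ψ : homComplex P' Y ⟶ homComplex P Y := ((homFunctor Y).mapHomologicalComplex _).map φ.hom
  let z' : homCocycles P' Y n := (HomologicalComplex.opcyclesMap ψ n).unop.hom z
  have hcocycle : cocycleHom P' Y n z' = φ.hom.f n ≫ cocycleHom P Y n z :=
    congrArg (fun η => η.unop.hom z) (HomologicalComplex.p_opcyclesMap ψ n)
  have hclass : (((Ext R (ModuleCat.{u} R) n).map g.op).app Y).hom (toDerivedExt P Y n z) =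
      toDerivedExt P' Y n z' :=
    congrArg (fun η => η.unop.hom z) (derivedExtToOpcycles_naturality P Y n P' φ)
  have hext : toExt P' Y n z' = (Abelian.Ext.mk₀ g).comp (toExt P Y n z) (zero_add n) := by
    simp only [toExt, LinearMap.coe_mk, AddHom.coe_mk,
      ProjectiveResolution.mk₀_comp_extMk _ _ _ _ φ, hcocycle]
  rw [derivedExtEquiv_toDerivedExt, ← hext, ← derivedExtEquiv_toDerivedExt]
  exact congrArg _ hclass

end ExtComparison

section LocalCohomologyComparison

variable {R : Type u} [CommRing R] (J : Ideal R) (i : ℕ) (M : ModuleCat.{u} R)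

/-- The diagram of the modules `derivedExt (R ⧸ J ^ k) M i`, whose colimit is the local cohomology
of `M`. -/
noncomputable abbrev lcDiagram : (ℕᵒᵖ)ᵒᵖ ⥤ ModuleCat.{u} R :=
  localCohomology.diagram (localCohomology.idealPowersDiagram J) i ⋙ (evaluation _ _).obj M

/-- The identification of the `k`-th term of `lcDiagram` with `Abelian.Ext`. -/
noncomputable def lcDiagramEquiv (k : (ℕᵒᵖ)ᵒᵖ) :
    (lcDiagram J i M).obj k ≃ₗ[R] Abelian.Ext (ModuleCat.of R (R ⧸ J ^ k.unop.unop)) M i :=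
  derivedExtEquiv (projectiveResolution (ModuleCat.of R (R ⧸ J ^ k.unop.unop))) M i

lemma lcDiagramEquiv_map {k l : (ℕᵒᵖ)ᵒᵖ} (f : k ⟶ l) (x : (lcDiagram J i M).obj k) :
    lcDiagramEquiv J i M l (((lcDiagram J i M).map f).hom x) =
      extTransition J i M k.unop.unop l.unop.unop f.unop.unop.le (lcDiagramEquiv J i M k x) :=
  derivedExtEquiv_map (projectiveResolution (ModuleCat.of R (R ⧸ J ^ k.unop.unop))) M i
    (projectiveResolution (ModuleCat.of R (R ⧸ J ^ l.unop.unop))) (quotPowProj J f.unop.unop.le) x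

/-- `ExtLimit J i M` as the point of a cocone on `lcDiagram`. -/
noncomputable def extLimitCocone : Limits.Cocone (lcDiagram J i M) where
  pt := ModuleCat.of R (ExtLimit J i M)
  ι :=
    { app k := ModuleCat.ofHom
        (ExtLimit.of J i M k.unop.unop ∘ₗ (lcDiagramEquiv J i M k).toLinearMap)
      naturality k l f := ModuleCat.hom_ext <| LinearMap.ext fun x => by
        change ExtLimit.of J i M _ (lcDiagramEquiv J i M l (((lcDiagram J i M).map f).hom x)) =
          ExtLimit.of J i M _ (lcDiagramEquiv J i M k x)
        rw [lcDiagramEquiv_map, ExtLimit.of_extTransition] }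

/-- The linear map out of `ExtLimit J i M` induced by a cocone on `lcDiagram`. -/
noncomputable def extLimitDesc (s : Limits.Cocone (lcDiagram J i M)) :
    ExtLimit J i M →ₗ[R] s.pt :=
  Module.DirectLimit.lift R ℕ _ _
    (fun k => (s.ι.app (.op (.op k))).hom ∘ₗ (lcDiagramEquiv J i M (.op (.op k))).symm.toLinearMap)
    fun k l hkl x => by
      obtain ⟨y, rfl⟩ := (lcDiagramEquiv J i M (.op (.op k))).surjective x
      have hmap := lcDiagramEquiv_map J i M (homOfLE hkl).op.op y
      have hw := congrArg (fun φ => φ.hom y) (s.w (homOfLE hkl).op.op)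
      simp only [LinearMap.comp_apply, LinearEquiv.coe_coe, LinearEquiv.symm_apply_apply]
      exact (congrArg _ ((LinearEquiv.symm_apply_eq _).2 hmap.symm)).trans hw

lemma extLimitDesc_of (s : Limits.Cocone (lcDiagram J i M)) (k : (ℕᵒᵖ)ᵒᵖ)
    (x : (lcDiagram J i M).obj k) :
    extLimitDesc J i M s (ExtLimit.of J i M k.unop.unop (lcDiagramEquiv J i M k x)) =
      (s.ι.app k).hom x := by
  refine Eq.trans ?_ (congrArg (s.ι.app k).hom ((lcDiagramEquiv J i M k).symm_apply_apply x))
  rw [extLimitDesc, ExtLimit.of, Module.DirectLimit.lift_of]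
  rfl

/-- `extLimitCocone` is a colimit cocone. -/
noncomputable def extLimitCoconeIsColimit : Limits.IsColimit (extLimitCocone J i M) where
  desc s := ModuleCat.ofHom (extLimitDesc J i M s)
  fac s k := ModuleCat.hom_ext <| LinearMap.ext <| extLimitDesc_of J i M s k
  uniq s m hm := ModuleCat.hom_ext <| Module.DirectLimit.hom_ext fun k => LinearMap.ext fun x => by
    obtain ⟨y, rfl⟩ := (lcDiagramEquiv J i M (.op (.op k))).surjective x
    exact (congrArg (fun φ => φ.hom y) (hm (.op (.op k)))).trans
      (extLimitDesc_of J i M s (.op (.op k)) y).symm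

theorem length_localCohomology (N : Type u) [AddCommGroup N] [Module R N] :
    Module.length R ((localCohomology J i).obj (ModuleCat.of R N)) = lcLength J i N :=
  (Limits.IsColimit.coconePointUniqueUpToIso
    (Limits.isColimitOfPreserves ((evaluation _ _).obj (ModuleCat.of R N))
      (Limits.colimit.isColimit
        (localCohomology.diagram (localCohomology.idealPowersDiagram J) i)))
    (extLimitCoconeIsColimit J i (ModuleCat.of R N))).toLinearEquiv.length_eq

theorem mlen_lcoh [IsLocalRing R] (N : Type u) [AddCommGroup N] [Module R N] :
    mlen R (lcoh R i N) = (lcLength (maximalIdeal R) i N : WithBot ℕ∞) := by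
  rw [← length_localCohomology, Module.coe_length]
  rfl

end LocalCohomologyComparison

/-! ### The torsion submodule and the support dimension -/

section Torsion

open scoped Pointwise

variable {R : Type u} [CommRing R] [IsLocalRing R] {M : Type u} [AddCommGroup M] [Module R M]

lemma mem_H0 {x : M} : x ∈ H0 R M ↔ ∃ n, ∀ r ∈ maximalIdeal R ^ n, r • x = 0 :=
  mem_iSup_torsionBySet_pow (maximalIdeal R) M

lemma lcLength_zero_eq_length_H0 (M : Type u) [AddCommGroup M] [Module R M] :
    lcLength (maximalIdeal R) 0 M = Module.length R (H0 R M) :=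
  lcLength_zero (maximalIdeal R) M

lemma le_H0_of_pow_le_annihilator {N : Submodule R M} {c : ℕ}
    (hc : maximalIdeal R ^ c ≤ Module.annihilator R N) : N ≤ H0 R M :=
  fun x hx => mem_H0.2 ⟨c, fun _ hr => Submodule.mem_annihilator.1 (hc hr) x hx⟩

variable [IsNoetherianRing R]

lemma pow_smul_eq_bot_of_length_le {k : ℕ} {N : Submodule R M} (hN : N.FG)
    (hk : Module.length R N ≤ k) : maximalIdeal R ^ k • N = ⊥ := by
  induction k generalizing N with
  | zero =>
    rw [Nat.cast_zero, nonpos_iff_eq_zero, Module.length_eq_zero_iff,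
      Submodule.subsingleton_iff_eq_bot] at hk
    rw [hk, Submodule.smul_bot]
  | succ k ih =>
    rcases eq_or_ne N ⊥ with rfl | hbot
    · exact Submodule.smul_bot _
    have hlt : maximalIdeal R • N < N := by
      refine lt_of_le_of_ne Submodule.smul_le_right fun heq => hbot ?_
      exact Submodule.eq_bot_of_le_smul_of_le_jacobson_bot _ N hN heq.ge
        (maximalIdeal_le_jacobson _)
    have hlen : Module.length R (maximalIdeal R • N : Submodule R M) < Module.length R N := by
      simp only [Module.length_submodule] at hk ⊢
      exact Order.height_strictMono hlt
        (((Order.height_mono hlt.le).trans hk).trans_lt (ENat.natCast_lt_top (k + 1)))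
    rw [pow_succ, Submodule.mul_smul]
    refine ih (Submodule.FG.smul (IsNoetherian.noetherian _) hN) ?_
    exact Order.le_of_lt_add_one (hlen.trans_le (by exact_mod_cast hk))

lemma supportDim_le_zero_iff [Module.Finite R M] :
    Module.supportDim R M ≤ 0 ↔ ∃ k, maximalIdeal R ^ k ≤ Module.annihilator R M := by
  constructor
  · intro hdim
    rw [Module.supportDim_eq_ringKrullDim_quotient_annihilator] at hdim
    have := isArtinianRing_iff_krullDimLE_zero.2 (Ring.krullDimLE_iff.2 (mod_cast hdim))
    exact exists_maximalIdeal_pow_le_of_isArtinianRing_quotient _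
  · rintro ⟨k, hk⟩
    have hclosed (p) (hp : p ∈ Module.support R M) : p = closedPoint R := by
      rw [Module.support_eq_zeroLocus, PrimeSpectrum.mem_zeroLocus] at hp
      exact PrimeSpectrum.ext ((maximalIdeal.isMaximal R).eq_of_le p.2.ne_top
        (Ideal.IsPrime.le_of_pow_le (hk.trans hp))).symm
    have : Subsingleton (Module.support R M) :=
      ⟨fun p q => Subtype.ext ((hclosed p p.2).trans (hclosed q q.2).symm)⟩
    exact Order.krullDim_nonpos_of_subsingleton

lemma exists_pow_le_annihilator_of_le_H0 [Module.Finite R M] {N : Submodule R M}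
    (hN : N ≤ H0 R M) : ∃ c, maximalIdeal R ^ c ≤ Module.annihilator R N := by
  obtain ⟨s, rfl⟩ : N.FG := IsNoetherian.noetherian _
  have hgen (x) (hx : x ∈ s) : ∃ n, ∀ r ∈ maximalIdeal R ^ n, r • x = 0 :=
    mem_H0.1 (hN (Submodule.subset_span hx))
  choose! f hf using hgen
  refine ⟨s.sup f, fun r hr => (Submodule.mem_annihilator_span _ r).2 fun x => ?_⟩
  exact hf x x.2 r (Ideal.pow_le_pow_right (Finset.le_sup x.2) hr)

variable [Module.Finite R M]

lemma mem_H0_of_pow_smul_mem {n : ℕ} {x : M} (hx : ∀ r ∈ maximalIdeal R ^ n, r • x ∈ H0 R M) :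
    x ∈ H0 R M := by
  obtain ⟨c, hc⟩ := exists_pow_le_annihilator_of_le_H0 (le_refl (H0 R M))
  refine mem_H0.2 ⟨c + n, fun r hr => ?_⟩
  rw [pow_add] at hr
  refine Submodule.mul_induction_on hr (fun s hs t ht => ?_) fun s t hs ht => ?_
  · rw [mul_smul]
    exact Submodule.mem_annihilator.1 (hc hs) _ (hx t ht)
  · rw [add_smul, hs, ht, add_zero]

lemma H0_quotient_H0 : H0 R (M ⧸ H0 R M) = ⊥ := by
  rw [eq_bot_iff]
  intro x hx
  obtain ⟨n, hn⟩ := mem_H0.1 hx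
  obtain ⟨y, rfl⟩ := Submodule.mkQ_surjective _ x
  rw [Submodule.mem_bot, Submodule.mkQ_apply, Submodule.Quotient.mk_eq_zero]
  exact mem_H0_of_pow_smul_mem fun r hr => (Submodule.Quotient.mk_eq_zero _).1 (hn r hr)

lemma exists_isSMulRegular_of_H0_eq_bot (hM : H0 R M = ⊥) :
    ∃ x ∈ maximalIdeal R, IsSMulRegular M x := by
  have hzero (f : (R ⧸ maximalIdeal R) →ₗ[R] M) : f = 0 := by
    have hf : f (Ideal.Quotient.mk _ 1) ∈ H0 R M := by
      refine mem_H0.2 ⟨1, fun r hr => ?_⟩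
      rw [pow_one] at hr
      have hr1 : r • Ideal.Quotient.mk (maximalIdeal R) 1 = 0 := by
        rw [map_one, Algebra.smul_def, mul_one]
        exact Ideal.Quotient.eq_zero_iff_mem.2 hr
      rw [← map_smul, hr1, map_zero]
    rw [hM, Submodule.mem_bot] at hf
    ext
    simpa using hf
  obtain ⟨r, hr, hreg⟩ := IsSMulRegular.subsingleton_linearMap_iff.1
    (⟨fun f g => (hzero f).trans (hzero g).symm⟩ :
      Subsingleton ((R ⧸ maximalIdeal R) →ₗ[R] M))
  exact ⟨r, Ideal.annihilator_quotient (I := maximalIdeal R) ▸ hr, hreg⟩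

lemma lcLength_le_of_surjective {P : Type u} [AddCommGroup P] [Module R P] {g : M →ₗ[R] P}
    (hg : Surjective g) (hker : LinearMap.ker g ≤ H0 R M) (i : ℕ) :
    lcLength (maximalIdeal R) i P ≤ lcLength (maximalIdeal R) i M := by
  obtain ⟨c, hc⟩ := exists_pow_le_annihilator_of_le_H0 hker
  simpa only [lcLength_succ_eq_zero hc, add_zero] using
    lcLength_le_add_ker (maximalIdeal R) hg i

section ParameterQuotient

variable {a : R} (ha : Submodule.torsionBy R M a ≤ H0 R M)

include ha

lemma lcLength_ker_mkQ_smul_top_le (i : ℕ) :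
    lcLength (maximalIdeal R) i (LinearMap.ker (a • ⊤ : Submodule R M).mkQ) ≤
      lcLength (maximalIdeal R) i M := by
  let f : M →ₗ[R] LinearMap.ker (a • ⊤ : Submodule R M).mkQ :=
    (LinearMap.lsmul R M a).codRestrict _ fun x => by
      rw [Submodule.ker_mkQ]
      exact Submodule.smul_mem_pointwise_smul x a ⊤ trivial
  have hf : Surjective f := by
    rintro ⟨y, hy⟩
    rw [Submodule.ker_mkQ] at hy
    obtain ⟨x, -, rfl⟩ := (Submodule.mem_smul_pointwise_iff_exists _ _ _).1 hy
    exact ⟨x, rfl⟩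
  refine lcLength_le_of_surjective hf (fun x hx => ha ?_) i
  exact (Submodule.mem_torsionBy_iff a x).2 (congrArg Subtype.val hx)

lemma lcLength_quotSMulTop_le (i : ℕ) :
    lcLength (maximalIdeal R) i (QuotSMulTop a M) ≤
      lcLength (maximalIdeal R) i M + lcLength (maximalIdeal R) (i + 1) M :=
  (lcLength_le_add_ker (maximalIdeal R) (Submodule.mkQ_surjective _) i).trans
    (by gcongr; exact lcLength_ker_mkQ_smul_top_le ha _)

lemma smul_eq_zero_of_mem_H0 (h0 : lcLength (maximalIdeal R) 0 M < ⊤)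
    (h1 : lcLength (maximalIdeal R) 1 M < ⊤)
    (hle : lcLength (maximalIdeal R) 0 M + lcLength (maximalIdeal R) 1 M ≤
      lcLength (maximalIdeal R) 0 (QuotSMulTop a M)) {x : M} (hx : x ∈ H0 R M) : a • x = 0 := by
  let K := LinearMap.ker (a • ⊤ : Submodule R M).mkQ
  have hK : lcLength (maximalIdeal R) 0 K = 0 := by
    have hadd : lcLength (maximalIdeal R) 0 M + lcLength (maximalIdeal R) 1 M +
        lcLength (maximalIdeal R) 0 K ≤
          lcLength (maximalIdeal R) 0 M + lcLength (maximalIdeal R) 1 M :=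
      calc
        _ ≤ lcLength (maximalIdeal R) 0 (QuotSMulTop a M) + lcLength (maximalIdeal R) 0 K := by
          gcongr
        _ ≤ lcLength (maximalIdeal R) 0 M + lcLength (maximalIdeal R) 1 K :=
          lcLength_zero_add_ker_le (maximalIdeal R) (Submodule.mkQ_surjective _)
        _ ≤ _ := by gcongr; exact lcLength_ker_mkQ_smul_top_le ha 1
    simpa using (ENat.add_le_add_iff_left (ENat.add_lt_top.2 ⟨h0, h1⟩).ne).1
      (hadd.trans_eq (add_zero _).symm)
  rw [lcLength_zero_eq_length_H0, Module.length_eq_zero_iff,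
    Submodule.subsingleton_iff_eq_bot] at hK
  obtain ⟨n, hn⟩ := mem_H0.1 hx
  have hax : a • x ∈ K := by
    rw [show K = _ from Submodule.ker_mkQ _]
    exact Submodule.smul_mem_pointwise_smul x a ⊤ trivial
  have hmem : (⟨a • x, hax⟩ : K) ∈ H0 R K :=
    mem_H0.2 ⟨n, fun r hr => Subtype.ext (by simp [smul_comm r a, hn r hr])⟩
  rw [hK, Submodule.mem_bot] at hmem
  exact congrArg Subtype.val hmem

end ParameterQuotient

lemma supportDim_map_mkQ_add_one_le {y : R} (hy : y ∈ maximalIdeal R) (hreg : IsSMulRegular M y)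
    (N : Submodule R M) :
    Module.supportDim R (N.map (y • ⊤ : Submodule R M).mkQ) + 1 ≤ Module.supportDim R N := by
  have hker : y • (⊤ : Submodule R N) ≤
      LinearMap.ker ((y • ⊤ : Submodule R M).mkQ.submoduleMap N) := by
    intro z hz
    obtain ⟨w, -, rfl⟩ := (Submodule.mem_smul_pointwise_iff_exists _ _ _).1 hz
    exact Subtype.ext ((Submodule.Quotient.mk_eq_zero _).2
      (Submodule.smul_mem_pointwise_smul (w : M) y ⊤ trivial))
  have hsurj : Surjective (Submodule.liftQ _ _ hker) := by
    rw [← LinearMap.range_eq_top, Submodule.range_liftQ, LinearMap.range_eq_top]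
    exact LinearMap.submoduleMap_surjective _ _
  rw [← Module.supportDim_quotSMulTop_succ_eq_supportDim (hreg.submodule N y) hy]
  gcongr
  exact Module.supportDim_le_of_surjective _ hsurj

lemma pow_smul_le_smul_top {y : R} (hy : Submodule.torsionBy R M y ≤ H0 R M) {k : ℕ}
    (hk : lcLength (maximalIdeal R) 0 M + lcLength (maximalIdeal R) 1 M ≤ k) {N : Submodule R M}
    (hN : N.map (y • ⊤ : Submodule R M).mkQ ≤ H0 R (QuotSMulTop y M)) :
    maximalIdeal R ^ k • N ≤ y • ⊤ := by
  have hlen : Module.length R (N.map (y • ⊤ : Submodule R M).mkQ) ≤ k :=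
    calc
      _ ≤ Module.length R (H0 R (QuotSMulTop y M)) :=
        Module.length_le_of_injective _ (Submodule.inclusion_injective hN)
      _ = lcLength (maximalIdeal R) 0 (QuotSMulTop y M) :=
        (lcLength_zero_eq_length_H0 _).symm
      _ ≤ k := (lcLength_quotSMulTop_le hy 0).trans hk
  have hbot := pow_smul_eq_bot_of_length_le (IsNoetherian.noetherian _) hlen
  rwa [← Submodule.map_smul'', ← le_bot_iff, Submodule.map_le_iff_le_comap,
    Submodule.comap_bot, Submodule.ker_mkQ] at hbot

-- The power of the maximal ideal killing `N` modulo `x ^ (n + 1)` can be chosen independently of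
-- `n`, so Krull's intersection theorem applies.
lemma le_H0_of_forall_map_mkQ_pow_le {x : R} (hx : x ∈ maximalIdeal R) (hreg : IsSMulRegular M x)
    (h0 : lcLength (maximalIdeal R) 0 M < ⊤) (h1 : lcLength (maximalIdeal R) 1 M < ⊤)
    {N : Submodule R M} (hN : ∀ n : ℕ, N.map (x ^ (n + 1) • ⊤ : Submodule R M).mkQ ≤
      H0 R (QuotSMulTop (x ^ (n + 1)) M)) : N ≤ H0 R M := by
  obtain ⟨k, hk⟩ := ENat.ne_top_iff_exists.1 (ENat.add_lt_top.2 ⟨h0, h1⟩).ne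
  have hpow (n : ℕ) : maximalIdeal R ^ k • N ≤ Ideal.span {x} ^ n • (⊤ : Submodule R M) := by
    have htors : Submodule.torsionBy R M (x ^ (n + 1)) ≤ H0 R M := fun z hz =>
      ((hreg.pow (n + 1)).right_eq_zero_of_smul hz) ▸ zero_mem _
    refine (pow_smul_le_smul_top htors hk.ge (hN n)).trans ?_
    rw [← Submodule.ideal_span_singleton_smul, ← Ideal.span_singleton_pow]
    exact Submodule.smul_mono_left (Ideal.pow_le_pow_right n.le_succ)
  have hbot : maximalIdeal R ^ k • N = ⊥ := by
    rw [eq_bot_iff, ← Ideal.iInf_pow_smul_eq_bot_of_isLocalRing (M := M) (Ideal.span {x})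
      fun htop => hx (Ideal.span_singleton_eq_top.1 htop)]
    exact le_iInf hpow
  exact fun z hz => mem_H0.2
    ⟨k, fun r hr => (Submodule.mem_bot R).1 (hbot ▸ Submodule.smul_mem_smul hr hz)⟩

theorem le_H0_of_supportDim_le {d : ℕ} (hM : ∀ i ≤ d, lcLength (maximalIdeal R) i M < ⊤)
    {N : Submodule R M} (hN : Module.supportDim R N ≤ d) : N ≤ H0 R M := by
  induction d generalizing M with
  | zero =>
    obtain ⟨k, hk⟩ := supportDim_le_zero_iff.1 (mod_cast hN)
    exact le_H0_of_pow_le_annihilator hk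
  | succ d ih =>
    have hQ (i : ℕ) (hi : i ≤ d + 1) : lcLength (maximalIdeal R) i (M ⧸ H0 R M) < ⊤ :=
      (lcLength_le_of_surjective (H0 R M).mkQ_surjective (H0 R M).ker_mkQ.le i).trans_lt (hM i hi)
    suffices hmap : N.map (H0 R M).mkQ ≤ H0 R (M ⧸ H0 R M) by
      rwa [H0_quotient_H0, Submodule.map_le_iff_le_comap, Submodule.comap_bot,
        Submodule.ker_mkQ] at hmap
    obtain ⟨x, hx, hreg⟩ := exists_isSMulRegular_of_H0_eq_bot (H0_quotient_H0 (R := R) (M := M))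
    refine le_H0_of_forall_map_mkQ_pow_le hx hreg (hQ 0 (by lia)) (hQ 1 (by lia)) fun n => ?_
    have hxn : x ^ (n + 1) ∈ maximalIdeal R := Ideal.pow_mem_of_mem _ hx _ n.succ_pos
    refine ih (fun i hi => ?_) ?_
    · refine (lcLength_quotSMulTop_le (fun z hz => ?_) i).trans_lt
        (ENat.add_lt_top.2 ⟨hQ i (by lia), hQ (i + 1) (by lia)⟩)
      exact ((hreg.pow (n + 1)).right_eq_zero_of_smul hz) ▸ zero_mem _
    · have hdim := (supportDim_map_mkQ_add_one_le hxn (hreg.pow (n + 1)) _).trans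
        ((Module.supportDim_le_of_surjective _
          ((H0 R M).mkQ.submoduleMap_surjective N)).trans hN)
      rwa [ENat.WithBot.add_one_le_natCast_iff, Nat.cast_add, Nat.cast_one,
        ENat.WithBot.lt_add_one_iff] at hdim

end Torsion

/-! ### Hilbert functions with finite values -/

section FiniteHilbert

open scoped Pointwise

variable {R : Type u} [CommRing R] {M : Type u} [AddCommGroup M] [Module R M]

/-- All values `λ(M / qⁿM)` of the Hilbert–Samuel function are finite. -/
def FiniteHilbert (q : Ideal R) (M : Type u) [AddCommGroup M] [Module R M] : Prop :=
  ∀ n, Module.length R (M ⧸ (q ^ n • ⊤ : Submodule R M)) < ⊤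

lemma mem_span_singleton_sup (a : R) (q : Ideal R) : a ∈ Ideal.span {a} ⊔ q :=
  Ideal.mem_sup_left (Ideal.mem_span_singleton_self a)

lemma span_singleton_smul_quotSMulTop_eq_bot (a : R) (N : Submodule R (QuotSMulTop a M)) :
    Ideal.span {a} • N = ⊥ := by
  rw [eq_bot_iff, Submodule.ideal_span_singleton_smul]
  rintro _ ⟨y, -, rfl⟩
  obtain ⟨z, rfl⟩ := Submodule.mkQ_surjective _ y
  exact (Submodule.Quotient.mk_eq_zero _).2 (Submodule.smul_mem_pointwise_smul z a ⊤ trivial)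

lemma sup_pow_smul_top_quotSMulTop (a : R) (q : Ideal R) (n : ℕ) :
    ((Ideal.span {a} ⊔ q) ^ n • ⊤ : Submodule R (QuotSMulTop a M)) = q ^ n • ⊤ := by
  induction n with
  | zero => simp
  | succ n ih =>
    rw [pow_succ', Submodule.mul_smul, ih, Submodule.sup_smul,
      span_singleton_smul_quotSMulTop_eq_bot, bot_sup_eq, ← Submodule.mul_smul, ← pow_succ']

lemma map_mkQ_sup_pow_smul_top (a : R) (q : Ideal R) (n : ℕ) :
    ((Ideal.span {a} ⊔ q) ^ n • ⊤ : Submodule R M).map (a • ⊤ : Submodule R M).mkQ =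
      q ^ n • (⊤ : Submodule R (QuotSMulTop a M)) := by
  rw [Submodule.map_smul'', Submodule.map_top, Submodule.range_mkQ, sup_pow_smul_top_quotSMulTop]

lemma length_quotient_le_of_le {A B : Submodule R M} (h : A ≤ B) :
    Module.length R (M ⧸ B) ≤ Module.length R (M ⧸ A) :=
  Module.length_le_of_surjective (Submodule.factor h) (Submodule.factor_surjective h)

lemma FiniteHilbert.quotSMulTop {a : R} {q : Ideal R}
    (h : FiniteHilbert (Ideal.span {a} ⊔ q) M) : FiniteHilbert q (QuotSMulTop a M) := by
  intro n
  refine (Module.length_le_of_surjective (Submodule.mapQ _ _ (a • ⊤ : Submodule R M).mkQ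
    (Submodule.map_le_iff_le_comap.1 (map_mkQ_sup_pow_smul_top a q n).le)) ?_).trans_lt (h n)
  rw [← LinearMap.range_eq_top, Submodule.range_mapQ, Submodule.range_mkQ, Submodule.map_top,
    Submodule.range_mkQ]

variable [IsNoetherianRing R]

lemma FiniteHilbert.length_quotient_smul_top_lt_top [Module.Finite R M] {q : Ideal R}
    (h : FiniteHilbert q M) (N : Submodule R M) :
    Module.length R (N ⧸ (q • ⊤ : Submodule R N)) < ⊤ := by
  obtain ⟨k, hk⟩ := exists_pow_smul_top_inf_le q N 1
  have hle : (q ^ k • ⊤ : Submodule R M).comap N.subtype ≤ (q • ⊤ : Submodule R N) := by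
    rw [← Submodule.map_le_map_iff_of_injective N.subtype_injective, Submodule.map_comap_subtype,
      Submodule.map_smul'', Submodule.map_top, Submodule.range_subtype, inf_comm]
    rwa [pow_one] at hk
  refine ((length_quotient_le_of_le hle).trans ?_).trans_lt (h k)
  refine Module.length_le_of_injective (Submodule.mapQ _ _ N.subtype le_rfl) ?_
  rw [← LinearMap.ker_eq_bot, Submodule.ker_mapQ, Submodule.mkQ_map_self]

variable [IsLocalRing R]

lemma supportDim_le_length {bs : List R} (hbs : ∀ b ∈ bs, b ∈ maximalIdeal R)
    (Z : Type u) [AddCommGroup Z] [Module R Z] [Module.Finite R Z]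
    (h : Module.length R (Z ⧸ (Ideal.ofList bs • ⊤ : Submodule R Z)) < ⊤) :
    Module.supportDim R Z ≤ bs.length := by
  induction bs generalizing Z with
  | nil =>
    have hZ : Module.length R (⊤ : Submodule R Z) < ⊤ := by
      have hbot : (Ideal.ofList ([] : List R) • ⊤ : Submodule R Z) = ⊥ := by simp
      rwa [Module.length_top, ← (Submodule.quotEquivOfEqBot _ hbot).length_eq]
    obtain ⟨k, hk⟩ := ENat.ne_top_iff_exists.1 hZ.ne
    have hpow := pow_smul_eq_bot_of_length_le (IsNoetherian.noetherian _) hk.ge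
    refine supportDim_le_zero_iff.2 ⟨k, fun r hr => Module.mem_annihilator.2 fun z => ?_⟩
    exact (Submodule.mem_bot R).1 (hpow ▸ Submodule.smul_mem_smul hr trivial)
  | cons b bs ih =>
    have hquot := ih (fun c hc => hbs c (List.mem_cons_of_mem _ hc)) (QuotSMulTop b Z)
      ((Submodule.quotOfListConsSMulTopEquivQuotSMulTopInner Z b bs).length_eq ▸ h)
    refine (Module.supportDim_le_supportDim_quotSMulTop_succ (hbs b List.mem_cons_self)).trans ?_
    exact_mod_cast add_le_add_left hquot 1

lemma torsionBy_le_H0 [Module.Finite R M] {a : R} {as : List R}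
    (has : ∀ b ∈ as, b ∈ maximalIdeal R) (hfin : FiniteHilbert (Ideal.ofList (a :: as)) M)
    (hM : ∀ i ≤ as.length, lcLength (maximalIdeal R) i M < ⊤) :
    Submodule.torsionBy R M a ≤ H0 R M := by
  refine le_H0_of_supportDim_le hM (supportDim_le_length has _ ?_)
  have ha : (Ideal.span {a} • ⊤ : Submodule R (Submodule.torsionBy R M a)) = ⊥ := by
    rw [eq_bot_iff, Submodule.ideal_span_singleton_smul]
    rintro _ ⟨z, -, rfl⟩
    exact Submodule.smul_torsionBy a z
  have hlen := hfin.length_quotient_smul_top_lt_top (Submodule.torsionBy R M a)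
  rwa [Ideal.ofList_cons, Submodule.sup_smul, ha, bot_sup_eq] at hlen

end FiniteHilbert

/-! ### Generators of powers of an ideal -/

section PowGens

variable {R : Type*} [CommRing R]

/-- The monomials of degree `k` in the entries of a list, as generators of the `k`-th power of the
ideal they generate. -/
def powGens : List R → ℕ → List R
  | _, 0 => [1]
  | [], _ + 1 => []
  | c :: cs, k + 1 => (powGens (c :: cs) k).map (c * ·) ++ powGens cs (k + 1)

lemma length_powGens (cs : List R) (k : ℕ) : (powGens cs k).length = cs.length.multichoose k := by
  fun_induction powGens cs k with
  | case1 => simp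
  | case2 => simp
  | case3 c cs k ih₁ ih₂ =>
    rw [List.length_append, List.length_map, ih₁, ih₂, List.length_cons,
      Nat.multichoose_succ_succ, add_comm]

lemma ofList_map_mul (c : R) (L : List R) :
    Ideal.ofList (L.map (c * ·)) = Ideal.span {c} * Ideal.ofList L := by
  induction L with
  | nil => simp
  | cons x L ih =>
    rw [List.map_cons, Ideal.ofList_cons, Ideal.ofList_cons, ih, Ideal.mul_sup,
      Ideal.span_singleton_mul_span_singleton]

lemma sup_pow_succ_eq (I J : Ideal R) (n : ℕ) :
    (I ⊔ J) ^ (n + 1) = I * (I ⊔ J) ^ n ⊔ J ^ (n + 1) := by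
  induction n with
  | zero => simp
  | succ n ih =>
    rw [pow_succ' (I ⊔ J), Ideal.sup_mul]
    apply le_antisymm
    · refine sup_le le_sup_left ?_
      rw [ih, Ideal.mul_sup, ← pow_succ', mul_left_comm]
      refine sup_le_sup_right (Ideal.mul_mono_right ?_) _
      rw [← ih, pow_succ']
      exact Ideal.mul_mono_left le_sup_right
    · rw [pow_succ' J]
      exact sup_le_sup_left (Ideal.mul_mono_right (Ideal.pow_right_mono le_sup_right _)) _

lemma ofList_powGens (cs : List R) (k : ℕ) : Ideal.ofList (powGens cs k) = Ideal.ofList cs ^ k := by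
  fun_induction powGens cs k with
  | case1 => simp
  | case2 => simp
  | case3 c cs k ih₁ ih₂ =>
    rw [Ideal.ofList_append, ofList_map_mul, ih₁, ih₂, Ideal.ofList_cons, sup_pow_succ_eq]

end PowGens

/-! ### The Hilbert function modulo one element -/

section Length

open scoped Pointwise

variable {R M : Type*} [CommRing R] [AddCommGroup M] [Module R M]

lemma length_quotient_eq_add_of_le {D C : Submodule R M} (h : D ≤ C) :
    Module.length R (M ⧸ D) = Module.length R (C.map D.mkQ) + Module.length R (M ⧸ C) := by
  rw [← (Submodule.quotientQuotientEquivQuotient D C h).length_eq]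
  exact Module.length_eq_add_of_exact (C.map D.mkQ).subtype (C.map D.mkQ).mkQ
    (Submodule.subtype_injective _) (Submodule.mkQ_surjective _) (LinearMap.exact_subtype_mkQ _)

lemma length_map_le {N : Type*} [AddCommGroup N] [Module R N] (f : M →ₗ[R] N) (A : Submodule R M) :
    Module.length R (A.map f) ≤ Module.length R A :=
  Module.length_le_of_surjective (f.submoduleMap A) (f.submoduleMap_surjective A)

lemma length_sup_le (A B : Submodule R M) :
    Module.length R (A ⊔ B : Submodule R M) ≤ Module.length R A + Module.length R B := by
  rw [← Module.length_prod]
  refine Module.length_le_of_surjective ((A.subtype.coprod B.subtype).codRestrict (A ⊔ B)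
    fun p => Submodule.add_mem_sup p.1.2 p.2.2) ?_
  rintro ⟨x, hx⟩
  obtain ⟨y, hy, z, hz, rfl⟩ := Submodule.mem_sup.1 hx
  exact ⟨(⟨y, hy⟩, ⟨z, hz⟩), rfl⟩

lemma length_map_mkQ_smul_le {C D D' : Submodule R M} {s : R} (hs : s • D ≤ D') :
    Module.length R ((s • C).map D'.mkQ) ≤ Module.length R (C.map D.mkQ) := by
  have hle : D ≤ D'.comap (LinearMap.lsmul R M s) := fun x hx =>
    hs (Submodule.smul_mem_pointwise_smul _ _ _ hx)
  have hmap : (s • C).map D'.mkQ = (C.map D.mkQ).map (D.mapQ D' (LinearMap.lsmul R M s) hle) := by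
    rw [← Submodule.map_comp, Submodule.mapQ_mkQ, Submodule.map_comp]
    rfl
  rw [hmap]
  exact length_map_le _ _

lemma length_map_mkQ_ofList_smul_le {C D D' : Submodule R M} {L : List R}
    (hL : Ideal.ofList L • D ≤ D') :
    Module.length R ((Ideal.ofList L • C).map D'.mkQ) ≤
      L.length * Module.length R (C.map D.mkQ) := by
  induction L with
  | nil =>
    rw [Ideal.ofList_nil, Submodule.bot_smul, Submodule.map_bot, Module.length_bot]
    exact zero_le
  | cons s L ih =>
    rw [Ideal.ofList_cons, Submodule.sup_smul, Submodule.ideal_span_singleton_smul] at hL ⊢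
    rw [Submodule.map_sup, List.length_cons, Nat.cast_add_one, add_one_mul, add_comm]
    exact (length_sup_le _ _).trans
      (add_le_add (length_map_mkQ_smul_le (le_sup_left.trans hL)) (ih (le_sup_right.trans hL)))

lemma length_map_mkQ_le_of_le_sup {C D C' D' : Submodule R M} {L : List R}
    (hD : Ideal.ofList L • D ≤ D') (hC : C' ≤ D' ⊔ Ideal.ofList L • C) :
    Module.length R (C'.map D'.mkQ) ≤ L.length * Module.length R (C.map D.mkQ) := by
  have hle : C'.map D'.mkQ ≤ (Ideal.ofList L • C).map D'.mkQ := by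
    refine (Submodule.map_mono hC).trans ?_
    rw [Submodule.map_sup, Submodule.mkQ_map_self, bot_sup_eq]
  exact (Module.length_le_of_injective _ (Submodule.inclusion_injective hle)).trans
    (length_map_mkQ_ofList_smul_le hD)

end Length

section ColonDefect

open scoped Pointwise

variable {R : Type u} [CommRing R]

/-- The submodule `(qⁿ⁺¹M : a)` of `M`. -/
def powColon (a : R) (q : Ideal R) (M : Type u) [AddCommGroup M] [Module R M] (n : ℕ) :
    Submodule R M :=
  (q ^ (n + 1) • ⊤ : Submodule R M).comap (LinearMap.lsmul R M a)

/-- The submodule `(0 : a) + qⁿM` of `M`, which is contained in `(qⁿ⁺¹M : a)` when `a ∈ q`. -/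
def torsionSupPow (a : R) (q : Ideal R) (M : Type u) [AddCommGroup M] [Module R M] (n : ℕ) :
    Submodule R M :=
  Submodule.torsionBy R M a ⊔ (q ^ n • ⊤)

/-- The length of `(qⁿ⁺¹M : a) / ((0 : a) + qⁿM)`, which measures how far the initial form of `a`
is from being a regular element of the associated graded module up to `0 : a`. -/
noncomputable def colonDefect (a : R) (q : Ideal R) (M : Type u) [AddCommGroup M] [Module R M]
    (n : ℕ) : ℕ∞ :=
  Module.length R ((powColon a q M n).map (torsionSupPow a q M n).mkQ)

variable {M : Type u} [AddCommGroup M] [Module R M] {a : R} {q : Ideal R}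

lemma mem_powColon {n : ℕ} {x : M} :
    x ∈ powColon a q M n ↔ a • x ∈ (q ^ (n + 1) • ⊤ : Submodule R M) := Iff.rfl

lemma torsionSupPow_le_powColon (ha : a ∈ q) (n : ℕ) :
    torsionSupPow a q M n ≤ powColon a q M n := by
  refine sup_le (fun x hx => ?_) (fun x hx => ?_)
  · rw [mem_powColon, (Submodule.mem_torsionBy_iff a x).1 hx]
    exact zero_mem _
  · rw [mem_powColon, pow_succ', Submodule.mul_smul]
    exact Submodule.smul_mem_smul ha hx

lemma length_quotient_pow_succ_eq (a : R) (q : Ideal R) (n : ℕ) :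
    Module.length R (M ⧸ ((Ideal.span {a} ⊔ q) ^ (n + 1) • ⊤ : Submodule R M)) =
      Module.length R (M ⧸ powColon a (Ideal.span {a} ⊔ q) M n) +
      Module.length R (QuotSMulTop a M ⧸ (q ^ (n + 1) • ⊤ : Submodule R (QuotSMulTop a M))) := by
  have hmap := map_mkQ_sup_pow_smul_top (M := M) a q (n + 1)
  rw [powColon]
  refine Module.length_eq_add_of_exact (Submodule.mapQ _ _ (LinearMap.lsmul R M a) le_rfl)
    (Submodule.mapQ _ _ _ (Submodule.map_le_iff_le_comap.1 hmap.le)) ?_ ?_ ?_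
  · rw [← LinearMap.ker_eq_bot, Submodule.ker_mapQ]
    exact Submodule.mkQ_map_self _
  · rw [← LinearMap.range_eq_top, Submodule.range_mapQ, Submodule.range_mkQ, Submodule.map_top,
      Submodule.range_mkQ]
  · rw [LinearMap.exact_iff, Submodule.ker_mapQ, Submodule.range_mapQ, ← hmap,
      Submodule.comap_map_eq, Submodule.ker_mkQ, Submodule.map_sup, Submodule.mkQ_map_self,
      bot_sup_eq, LinearMap.range_eq_map]
    rfl

lemma length_quotient_pow_eq (ha : a ∈ q) (n : ℕ) :
    Module.length R (M ⧸ (q ^ n • ⊤ : Submodule R M)) =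
      Module.length R ((Submodule.torsionBy R M a).map (q ^ n • ⊤ : Submodule R M).mkQ) +
        colonDefect a q M n + Module.length R (M ⧸ powColon a q M n) := by
  rw [add_assoc, colonDefect, ← length_quotient_eq_add_of_le (torsionSupPow_le_powColon ha n),
    length_quotient_eq_add_of_le (le_sup_right : q ^ n • ⊤ ≤ torsionSupPow a q M n),
    torsionSupPow, Submodule.map_sup, Submodule.mkQ_map_self, sup_bot_eq]

lemma FiniteHilbert.colonDefect_lt_top (h : FiniteHilbert q M) (ha : a ∈ q) (n : ℕ) :
    colonDefect a q M n < ⊤ :=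
  (le_add_self.trans le_self_add).trans_lt
    ((length_quotient_pow_eq (M := M) ha n).symm.trans_lt (h n))

lemma exists_powColon_add_le [IsNoetherianRing R] [Module.Finite R M] (a : R) (q : Ideal R) :
    ∃ n₀, ∀ k, powColon a q M (n₀ + k) ≤ Submodule.torsionBy R M a ⊔ q ^ k • powColon a q M n₀ := by
  obtain ⟨n₀, hn₀⟩ := Ideal.exists_pow_inf_eq_pow_smul q (LinearMap.range (LinearMap.lsmul R M a))
  refine ⟨n₀, fun k x hx => ?_⟩
  have hAR : (q ^ (n₀ + k + 1) • ⊤ ⊓ LinearMap.range (LinearMap.lsmul R M a) : Submodule R M) =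
      q ^ k • (q ^ (n₀ + 1) • ⊤ ⊓ LinearMap.range (LinearMap.lsmul R M a)) := by
    rw [hn₀ (n₀ + k + 1) (by lia), hn₀ (n₀ + 1) (by lia), ← Submodule.mul_smul, ← pow_add]
    congr 2
    lia
  have hrange : (q ^ (n₀ + 1) • ⊤ ⊓ LinearMap.range (LinearMap.lsmul R M a) : Submodule R M) ≤
      (powColon a q M n₀).map (LinearMap.lsmul R M a) := by
    rintro _ ⟨hy, y, rfl⟩
    exact ⟨y, hy, rfl⟩
  have hax : a • x ∈ (q ^ k • powColon a q M n₀).map (LinearMap.lsmul R M a) := by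
    rw [Submodule.map_smul'']
    exact Submodule.smul_mono le_rfl hrange (hAR ▸ ⟨hx, x, rfl⟩)
  obtain ⟨y, hy, hxy⟩ := hax
  rw [← sub_add_cancel x y]
  refine Submodule.add_mem_sup ?_ hy
  rw [Submodule.mem_torsionBy_iff, smul_sub, sub_eq_zero]
  exact hxy.symm

lemma sup_pow_smul_powColon_le (a : R) (q : Ideal R) (n k : ℕ) :
    (Ideal.span {a} ⊔ q) ^ k • powColon a (Ideal.span {a} ⊔ q) M n ≤
      (Ideal.span {a} ⊔ q) ^ (n + k) • ⊤ ⊔ q ^ k • powColon a (Ideal.span {a} ⊔ q) M n := by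
  rcases k with _ | k
  · simp
  have hcolon : Ideal.span {a} • powColon a (Ideal.span {a} ⊔ q) M n ≤
      (Ideal.span {a} ⊔ q) ^ (n + 1) • ⊤ := by
    rw [Submodule.ideal_span_singleton_smul]
    rintro _ ⟨y, hy, rfl⟩
    exact hy
  rw [sup_pow_succ_eq, Submodule.sup_smul, mul_comm, Submodule.mul_smul]
  refine sup_le_sup_right ((Submodule.smul_mono le_rfl hcolon).trans_eq ?_) _
  rw [← Submodule.mul_smul, ← pow_add]
  congr 2
  lia

lemma exists_colonDefect_add_le [IsNoetherianRing R] [Module.Finite R M] (a : R) (q : Ideal R) :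
    ∃ n₀, ∀ k, ∀ L : List R, Ideal.ofList L = q ^ k →
      colonDefect a (Ideal.span {a} ⊔ q) M (n₀ + k) ≤
        L.length * colonDefect a (Ideal.span {a} ⊔ q) M n₀ := by
  obtain ⟨n₀, hn₀⟩ := exists_powColon_add_le (M := M) a (Ideal.span {a} ⊔ q)
  refine ⟨n₀, fun k L hL => length_map_mkQ_le_of_le_sup ?_ ?_⟩
  · rw [hL, torsionSupPow, torsionSupPow, Submodule.smul_sup]
    refine sup_le_sup Submodule.smul_le_right ?_
    rw [← Submodule.mul_smul, add_comm n₀ k, pow_add]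
    exact Submodule.smul_mono_left (Ideal.mul_mono_left (Ideal.pow_right_mono le_sup_right k))
  · rw [hL, torsionSupPow, sup_assoc]
    exact (hn₀ k).trans (sup_le_sup_left (sup_pow_smul_powColon_le a q n₀ k) _)

end ColonDefect

/-! ### Binomial sums -/

section Binomial

lemma sum_range_add_choose_eq (n k : ℕ) :
    ∑ i ∈ Finset.range n, (i + k).choose k = (n + k).choose (k + 1) := by
  rcases n with _ | n
  · simp
  · rw [Nat.sum_range_add_choose, add_right_comm]

/-- The sum `∑ⱼ C(k,j) hⱼ`. With `k = d - 1` and `hⱼ = λ(Hʲ(M))` this is the bound for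
`λ(M/qM) - e₀(q, M)` that is attained by standard systems of parameters. -/
def binomSum (k : ℕ) (h : ℕ → ℕ) : ℕ := ∑ j ∈ Finset.range (k + 1), k.choose j * h j

lemma binomSum_zero (h : ℕ → ℕ) : binomSum 0 h = h 0 := by simp [binomSum]

lemma binomSum_succ (k : ℕ) (h : ℕ → ℕ) :
    binomSum (k + 1) h = binomSum k fun i => h i + h (i + 1) := by
  have hshift : ∑ j ∈ Finset.range (k + 1), k.choose (j + 1) * h (j + 1) + h 0 =
      ∑ j ∈ Finset.range (k + 1), k.choose j * h j := by
    have hlast := Finset.sum_range_succ (fun j => k.choose j * h j) (k + 1)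
    rw [Finset.sum_range_succ', Nat.choose_succ_self] at hlast
    simpa using hlast
  rw [binomSum, Finset.sum_range_succ']
  simp only [binomSum, Nat.choose_succ_succ', mul_add, add_mul, Finset.sum_add_distrib,
    Nat.choose_zero_right, one_mul]
  lia

lemma binomSum_le_binomSum {k : ℕ} {g h : ℕ → ℕ} (hgh : ∀ i ≤ k, g i ≤ h i) :
    binomSum k g ≤ binomSum k h :=
  Finset.sum_le_sum fun i hi =>
    Nat.mul_le_mul_left _ (hgh i (Nat.lt_succ_iff.1 (Finset.mem_range.1 hi)))

lemma binomSum_congr {k : ℕ} {g h : ℕ → ℕ} (hgh : ∀ i ≤ k, g i = h i) :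
    binomSum k g = binomSum k h :=
  le_antisymm (binomSum_le_binomSum fun i hi => (hgh i hi).le)
    (binomSum_le_binomSum fun i hi => (hgh i hi).ge)

lemma eq_zero_of_binomSum_eq_zero {k j : ℕ} {h : ℕ → ℕ} (hsum : binomSum k h = 0) (hj : j ≤ k) :
    h j = 0 := by
  have hterm := Finset.sum_eq_zero_iff.1 hsum j (Finset.mem_range_succ_iff.2 hj)
  exact (mul_eq_zero.1 hterm).resolve_left (Nat.choose_pos hj).ne'

lemma eq_of_binomSum_le {k : ℕ} {g h : ℕ → ℕ} (hgh : ∀ i ≤ k, g i ≤ h i)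
    (hle : binomSum k h ≤ binomSum k g) {i : ℕ} (hi : i ≤ k) : g i = h i := by
  have hterm : ∀ j ∈ Finset.range (k + 1), k.choose j * g j ≤ k.choose j * h j := fun j hj =>
    Nat.mul_le_mul_left _ (hgh j (Nat.lt_succ_iff.1 (Finset.mem_range.1 hj)))
  have heq := (Finset.sum_eq_sum_iff_of_le hterm).1
    (le_antisymm (Finset.sum_le_sum hterm) hle) i (Finset.mem_range.2 (Nat.lt_succ_iff.2 hi))
  exact Nat.eq_of_mul_eq_mul_left (Nat.choose_pos hi) heq

/-- The coefficients `∑ⱼ C(k-1,j-1) hⱼ` of the Hilbert–Samuel polynomial of a standard system of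
parameters, up to sign. -/
def standardCoeff (h : ℕ → ℕ) : ℕ → ℕ
  | 0 => h 0
  | k + 1 => binomSum k fun i => h (i + 1)

lemma standardCoeff_succ_eq {g h : ℕ → ℕ} {k : ℕ} (hgh : ∀ i ≤ k + 1, g i = h i + h (i + 1)) :
    standardCoeff g (k + 1) = standardCoeff h (k + 2) := by
  rw [standardCoeff, standardCoeff, binomSum_succ]
  exact binomSum_congr fun i hi => hgh (i + 1) (Nat.succ_le_succ hi)

lemma standardCoeff_eq_sum_bin (h : ℕ → ℕ) (i : ℕ) :
    standardCoeff h i = ∑ j ∈ Finset.range (i + 1), bin i j * h j := by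
  rcases i with _ | i
  · simp [standardCoeff, bin]
  · rw [Finset.sum_range_succ']
    simp [standardCoeff, bin, binomSum]

lemma standardCoeff_congr {g h : ℕ → ℕ} {k : ℕ} (hgh : ∀ i ≤ k, g i = h i) :
    standardCoeff g k = standardCoeff h k := by
  simp only [standardCoeff_eq_sum_bin]
  exact Finset.sum_congr rfl fun j hj => by rw [hgh j (Finset.mem_range_succ_iff.1 hj)]

end Binomial

section BinPoly

/-- The numerical polynomial `∑ₖ cₖ C(n+k,k)` of degree at most `D`. -/
def binPoly (D : ℕ) (c : ℕ → ℤ) (n : ℕ) : ℤ :=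
  ∑ k ∈ Finset.range (D + 1), c k * ((n + k).choose k : ℤ)

lemma binPoly_zero_left (c : ℕ → ℤ) (n : ℕ) : binPoly 0 c n = c 0 := by simp [binPoly]

lemma binPoly_zero_right (D : ℕ) (c : ℕ → ℤ) :
    binPoly D c 0 = ∑ k ∈ Finset.range (D + 1), c k := by simp [binPoly]

lemma binPoly_eq_zero_add (D : ℕ) (c : ℕ → ℤ) (n : ℕ) :
    binPoly (D + 1) c n =
      c 0 + ∑ k ∈ Finset.range (D + 1), c (k + 1) * ((n + (k + 1)).choose (k + 1) : ℤ) := by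
  rw [binPoly, Finset.sum_range_succ', add_comm]
  simp

lemma binPoly_succ_succ (D : ℕ) (c : ℕ → ℤ) (n : ℕ) :
    binPoly (D + 1) c (n + 1) = binPoly (D + 1) c n + binPoly D (fun k => c (k + 1)) (n + 1) := by
  rw [binPoly_eq_zero_add, binPoly_eq_zero_add, binPoly, add_assoc, ← Finset.sum_add_distrib]
  congr 1
  refine Finset.sum_congr rfl fun k _ => ?_
  rw [← mul_add, show n + 1 + (k + 1) = n + 1 + k + 1 by lia, Nat.choose_succ_succ',
    show n + (k + 1) = n + 1 + k by lia]
  push_cast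
  ring

lemma eq_of_eventually_binPoly_eq {D : ℕ} {c c' : ℕ → ℤ}
    (h : ∀ᶠ n in atTop, binPoly D c n = binPoly D c' n) {k : ℕ} (hk : k ≤ D) : c k = c' k := by
  induction D generalizing c c' k with
  | zero =>
    obtain ⟨n, hn⟩ := h.exists
    rwa [binPoly_zero_left, binPoly_zero_left, ← Nat.le_zero.1 hk] at hn
  | succ D ih =>
    have hsucc : ∀ k ≤ D, c (k + 1) = c' (k + 1) := by
      have hdiff : ∀ᶠ n in atTop,
          binPoly D (fun k => c (k + 1)) (n + 1) = binPoly D (fun k => c' (k + 1)) (n + 1) := by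
        filter_upwards [h, (tendsto_add_atTop_nat 1).eventually h] with n hn hn'
        rw [binPoly_succ_succ, binPoly_succ_succ, hn] at hn'
        exact add_left_cancel hn'
      intro k hk
      exact ih (c := fun k => c (k + 1)) (c' := fun k => c' (k + 1))
        ((eventually_map.2 hdiff).filter_mono (map_add_atTop_eq_nat 1).ge) hk
    rcases k with _ | k
    · obtain ⟨n, hn⟩ := h.exists
      rw [binPoly_eq_zero_add, binPoly_eq_zero_add, Finset.sum_congr rfl fun k hk => by
        rw [hsucc k (Nat.lt_succ_iff.1 (Finset.mem_range.1 hk))]] at hn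
      exact add_right_cancel hn
    · exact hsucc k (Nat.le_of_succ_le_succ hk)

lemma hsPoly_succ (d : ℕ) (e : ℕ → ℤ) (n : ℕ) :
    hsPoly d e (n + 1) = binPoly d (fun k => (-1) ^ (d - k) * e (d - k)) n := by
  rw [hsPoly, ← Finset.sum_range_reflect]
  refine Finset.sum_congr rfl fun k hk => ?_
  have hkd : k ≤ d := Nat.lt_succ_iff.1 (Finset.mem_range.1 hk)
  rw [show d + 1 - 1 - k = d - k by lia, show n + 1 + d - 1 - (d - k) = n + k by lia,
    Nat.sub_sub_self hkd]

lemma eq_binPoly_of_recursion {F G : ℕ → ℤ} {s t : ℕ → ℤ} {D : ℕ} (h1 : F 1 = G 1)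
    (hF : ∀ n, F (n + 2) + s 0 = F (n + 1) + G (n + 2)) (hG : ∀ n, G (n + 1) = binPoly D t n)
    (ht0 : t 0 = s 0 + s 1) (ht : ∀ k < D, t (k + 1) = s (k + 2)) (n : ℕ) :
    F (n + 1) = binPoly (D + 1) s n := by
  have hG' : ∀ n, G (n + 1) = s 0 + binPoly D (fun k => s (k + 1)) n := by
    intro n
    rw [hG]
    rcases D with _ | D
    · rw [binPoly_zero_left, binPoly_zero_left, ht0]
    · rw [binPoly_eq_zero_add, binPoly_eq_zero_add, ht0, add_assoc]
      congr 2
      exact Finset.sum_congr rfl fun k hk => by rw [ht k (Finset.mem_range.1 hk)]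
  induction n with
  | zero =>
    rw [zero_add, h1, ← zero_add 1, hG', binPoly_zero_right, binPoly_zero_right,
      Finset.sum_range_succ' s, add_comm]
  | succ n ih =>
    have hstep := hF n
    rw [ih, hG' (n + 1)] at hstep
    rw [binPoly_succ_succ]
    linarith

end BinPoly

/-! ### Lower bounds for the growth of a function -/

section GrowthLB

/-- `F` grows at least like a polynomial of degree `D + 1` with leading term
`c nᴰ⁺¹ / (D + 1)!`. -/
def GrowthLB (F : ℕ → ℕ) (D : ℕ) (c : ℤ) : Prop :=
  ∃ C : ℕ, ∀ n, c * ((n + D).choose (D + 1) : ℤ) ≤ F n + C * ((n + D).choose D : ℤ)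

lemma GrowthLB.mono {F : ℕ → ℕ} {D : ℕ} {c c' : ℤ} (h : GrowthLB F D c) (hc : c' ≤ c) :
    GrowthLB F D c' := by
  obtain ⟨C, hC⟩ := h
  exact ⟨C, fun n => le_trans (by gcongr) (hC n)⟩

lemma sum_range_le_of_forall_add_le {F G δ : ℕ → ℕ} {z : ℕ}
    (hF : ∀ n, F n + G (n + 1) ≤ F (n + 1) + z + δ n) (n : ℕ) :
    ∑ i ∈ Finset.range n, G (i + 1) ≤ F n + n * z + ∑ i ∈ Finset.range n, δ i := by
  induction n with
  | zero => simp
  | succ n ih =>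
    rw [Finset.sum_range_succ, Finset.sum_range_succ, add_one_mul]
    have := hF n
    lia

lemma GrowthLB.of_forall_add_le {F G δ : ℕ → ℕ} {z C D : ℕ} {c : ℤ} (hG : GrowthLB G D c)
    (hF : ∀ n, F n + G (n + 1) ≤ F (n + 1) + z + δ n)
    (hδ : ∀ n, ∑ i ∈ Finset.range n, δ i ≤ C * (n + (D + 1)).choose (D + 1)) :
    GrowthLB F (D + 1) c := by
  obtain ⟨C', hC'⟩ := hG
  refine ⟨C' + z + C, fun n => ?_⟩
  have hlead : ∑ i ∈ Finset.range n, (i + 1 + D).choose (D + 1) =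
      (n + (D + 1)).choose (D + 1 + 1) := by
    rw [← sum_range_add_choose_eq]
    exact Finset.sum_congr rfl fun i _ => by rw [add_right_comm, add_assoc]
  have hlower : ∑ i ∈ Finset.range n, (i + 1 + D).choose D ≤ (n + (D + 1)).choose (D + 1) := by
    rw [← add_assoc, add_right_comm, ← sum_range_add_choose_eq, Finset.sum_range_succ']
    exact Nat.le_add_right _ _
  have hlinear : n ≤ (n + (D + 1)).choose (D + 1) := by
    simpa using (Finset.sum_le_sum fun i _ => Nat.choose_pos (Nat.le_add_left D (i + 1))).trans
      hlower
  have hsum := Finset.sum_le_sum fun i (_ : i ∈ Finset.range n) => hC' (i + 1)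
  rw [← Finset.mul_sum, Finset.sum_add_distrib, ← Finset.mul_sum] at hsum
  have htel := sum_range_le_of_forall_add_le hF n
  have hδn := hδ n
  zify at hlead hlower hlinear htel hδn
  rw [hlead] at hsum
  push_cast
  nlinarith [mul_le_mul_of_nonneg_left hlower (Nat.cast_nonneg (α := ℤ) C'),
    mul_le_mul_of_nonneg_right hlinear (Nat.cast_nonneg (α := ℤ) z)]

lemma GrowthLB.of_forall_add_const_le {F δ : ℕ → ℕ} {z C l : ℕ}
    (hF : ∀ n, F n + l ≤ F (n + 1) + z + δ n) (hδ : ∀ n, ∑ i ∈ Finset.range n, δ i ≤ C) :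
    GrowthLB F 0 ((l : ℤ) - z) := by
  refine ⟨C, fun n => ?_⟩
  have htel := sum_range_le_of_forall_add_le (G := fun _ => l) hF n
  have hδn := hδ n
  simp only [Finset.sum_const, Finset.card_range, smul_eq_mul] at htel
  zify at htel hδn
  simp only [add_zero, zero_add, Nat.choose_one_right, Nat.choose_zero_right, Nat.cast_one]
  linarith

lemma binPoly_le (D : ℕ) (c : ℕ → ℤ) (n : ℕ) :
    binPoly D c n ≤ (∑ k ∈ Finset.range (D + 1), |c k|) * ((n + 1 + D).choose D : ℤ) := by
  rw [Finset.sum_mul]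
  refine Finset.sum_le_sum fun k hk => ?_
  have hkD : k ≤ D := Nat.lt_succ_iff.1 (Finset.mem_range.1 hk)
  have hchoose : (n + k).choose k ≤ (n + 1 + D).choose D :=
    calc (n + k).choose k = (n + k).choose n := Nat.choose_symm_add.symm
      _ ≤ (n + D).choose n := Nat.choose_le_choose n (by lia)
      _ = (n + D).choose D := Nat.choose_symm_add
      _ ≤ (n + 1 + D).choose D := Nat.choose_le_choose D (by lia)
  exact mul_le_mul (le_abs_self _) (mod_cast hchoose) (by positivity) (abs_nonneg _)

lemma not_growthLB_of_eventually_eq_binPoly {F : ℕ → ℕ} {D : ℕ} {c : ℕ → ℤ}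
    (hF : ∀ᶠ n in atTop, (F (n + 1) : ℤ) = binPoly (D + 1) c n) :
    ¬ GrowthLB F D (c (D + 1) + 1) := by
  rintro ⟨C, hC⟩
  set B : ℤ := ∑ k ∈ Finset.range (D + 1), |c k|
  obtain ⟨n, hn, hlarge⟩ := (hF.and (eventually_ge_atTop (((D + 1) * (B + C)).toNat))).exists
  have hpos : (0 : ℤ) < ((n + 1 + D).choose D : ℤ) := mod_cast Nat.choose_pos (Nat.le_add_left _ _)
  have hub : ((n + 1 + D).choose (D + 1) : ℤ) ≤ (B + C) * ((n + 1 + D).choose D : ℤ) := by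
    have hlower := binPoly_le D c n
    have hgrowth := hC (n + 1)
    have hsplit : binPoly (D + 1) c n =
        binPoly D c n + c (D + 1) * ((n + 1 + D).choose (D + 1) : ℤ) := by
      rw [binPoly, Finset.sum_range_succ, binPoly, add_right_comm n 1 D, add_assoc]
    rw [hn, hsplit] at hgrowth
    linarith
  have hmul : ((n + 1 + D).choose (D + 1) : ℤ) * (D + 1) = (n + 1 + D).choose D * (n + 1) := by
    have := Nat.choose_succ_right_eq (n + 1 + D) D
    rw [Nat.add_sub_cancel] at this
    exact_mod_cast this
  have hsmall : ((D : ℤ) + 1) * (B + C) < n + 1 :=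
    Int.lt_add_one_iff.2 ((Int.self_le_toNat _).trans (mod_cast hlarge))
  nlinarith [mul_lt_mul_of_pos_right hsmall hpos]

end GrowthLB

/-! ### The Hilbert–Samuel function -/

section HilbertFn

variable {R : Type u} [CommRing R]

/-- The Hilbert–Samuel function `n ↦ λ(M / qⁿM)`. Infinite lengths are replaced by `0`, so it is
meaningful only under `FiniteHilbert q M`. -/
noncomputable def hilbertFn (q : Ideal R) (M : Type u) [AddCommGroup M] [Module R M] (n : ℕ) : ℕ :=
  (Module.length R (M ⧸ (q ^ n • ⊤ : Submodule R M))).toNat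

variable {M : Type u} [AddCommGroup M] [Module R M] {a : R} {q : Ideal R}

lemma FiniteHilbert.coe_hilbertFn (h : FiniteHilbert q M) (n : ℕ) :
    (hilbertFn q M n : ℕ∞) = Module.length R (M ⧸ (q ^ n • ⊤ : Submodule R M)) :=
  ENat.natCast_toNat (h n).ne

lemma hilbertFn_bot_succ (n : ℕ) :
    hilbertFn (⊥ : Ideal R) M (n + 1) = hilbertFn (⊥ : Ideal R) M 1 := by
  rw [hilbertFn, hilbertFn, pow_one, pow_succ, Ideal.mul_bot]

lemma hilbertFn_quotSMulTop_one (a : R) (q : Ideal R) :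
    hilbertFn q (QuotSMulTop a M) 1 = hilbertFn (Ideal.span {a} ⊔ q) M 1 := by
  have hcolon : powColon a (Ideal.span {a} ⊔ q) M 0 = ⊤ := by
    refine eq_top_iff.2 fun x _ => ?_
    rw [mem_powColon, zero_add, pow_one]
    exact Submodule.smul_mem_smul (mem_span_singleton_sup a q) trivial
  have hlen := length_quotient_pow_succ_eq (M := M) a q 0
  rw [hcolon, Module.length_eq_zero (M := M ⧸ (⊤ : Submodule R M)), zero_add, zero_add] at hlen
  rw [hilbertFn, hilbertFn, hlen]

lemma FiniteHilbert.hilbertFn_add_le (h : FiniteHilbert (Ideal.span {a} ⊔ q) M)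
    (ha : Module.length R (Submodule.torsionBy R M a) < ⊤) (n : ℕ) :
    hilbertFn (Ideal.span {a} ⊔ q) M n + hilbertFn q (QuotSMulTop a M) (n + 1) ≤
      hilbertFn (Ideal.span {a} ⊔ q) M (n + 1) +
        (Module.length R (Submodule.torsionBy R M a)).toNat +
        (colonDefect a (Ideal.span {a} ⊔ q) M n).toNat := by
  rw [← Nat.cast_le (α := ℕ∞)]
  push_cast
  rw [h.coe_hilbertFn, h.quotSMulTop.coe_hilbertFn, h.coe_hilbertFn, ENat.natCast_toNat ha.ne,
    ENat.natCast_toNat (h.colonDefect_lt_top (mem_span_singleton_sup a q) n).ne,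
    length_quotient_pow_succ_eq, length_quotient_pow_eq (mem_span_singleton_sup a q) n]
  calc _ ≤ Module.length R (Submodule.torsionBy R M a) + colonDefect a (Ideal.span {a} ⊔ q) M n +
        Module.length R (M ⧸ powColon a (Ideal.span {a} ⊔ q) M n) + Module.length R
          (QuotSMulTop a M ⧸ (q ^ (n + 1) • ⊤ : Submodule R (QuotSMulTop a M))) := by
        gcongr
        exact length_map_le _ _
    _ = _ := by ring

lemma FiniteHilbert.exists_sum_colonDefect_le [IsNoetherianRing R] [Module.Finite R M]
    {cs : List R} (h : FiniteHilbert (Ideal.span {a} ⊔ Ideal.ofList cs) M) :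
    ∃ C : ℕ, ∀ n, ∑ i ∈ Finset.range n,
      (colonDefect a (Ideal.span {a} ⊔ Ideal.ofList cs) M i).toNat ≤
        C * (n + cs.length).choose cs.length := by
  set δ : ℕ → ℕ := fun i => (colonDefect a (Ideal.span {a} ⊔ Ideal.ofList cs) M i).toNat
  have hδ (i : ℕ) : (δ i : ℕ∞) = colonDefect a (Ideal.span {a} ⊔ Ideal.ofList cs) M i :=
    ENat.natCast_toNat (h.colonDefect_lt_top (mem_span_singleton_sup a _) i).ne
  obtain ⟨n₀, hn₀⟩ := exists_colonDefect_add_le (M := M) a (Ideal.ofList cs)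
  have hgrowth (k : ℕ) : δ (n₀ + k) ≤ cs.length.multichoose k * δ n₀ := by
    have := hn₀ k (powGens cs k) (ofList_powGens cs k)
    rw [length_powGens, ← hδ, ← hδ] at this
    exact_mod_cast this
  refine ⟨∑ i ∈ Finset.range n₀, δ i + δ n₀, fun n => ?_⟩
  have hpos : 0 < (n + cs.length).choose cs.length := Nat.choose_pos (Nat.le_add_left _ _)
  calc ∑ i ∈ Finset.range n, δ i
      ≤ ∑ i ∈ Finset.range (n₀ + (n + 1)), δ i :=
        Finset.sum_le_sum_of_subset (Finset.range_mono (by lia))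
    _ = ∑ i ∈ Finset.range n₀, δ i + ∑ k ∈ Finset.range (n + 1), δ (n₀ + k) :=
        Finset.sum_range_add _ _ _
    _ ≤ ∑ i ∈ Finset.range n₀, δ i +
        ∑ k ∈ Finset.range (n + 1), cs.length.multichoose k * δ n₀ := by
        gcongr with k
        exact hgrowth k
    _ = ∑ i ∈ Finset.range n₀, δ i + δ n₀ * (n + cs.length).choose cs.length := by
        rw [← Finset.sum_mul, Nat.sum_range_multichoose, mul_comm]
    _ ≤ (∑ i ∈ Finset.range n₀, δ i + δ n₀) * (n + cs.length).choose cs.length := by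
        rw [add_mul]
        gcongr
        exact Nat.le_mul_of_pos_right _ hpos

end HilbertFn

/-! ### Standard systems of parameters -/

lemma ofList_eq_of_perm {R : Type*} [CommRing R] {as bs : List R} (hp : as.Perm bs) :
    Ideal.ofList as = Ideal.ofList bs := by
  rw [Ideal.ofList, Ideal.ofList]
  congr 1
  ext x
  exact hp.mem_iff

section GenCM

open scoped Pointwise

variable {R : Type u} [CommRing R] [IsLocalRing R]

/-- The list `as` is contained in the maximal ideal, `M / (as)ⁿM` has finite length for all `n` and
`Hⁱ(M)` has finite length for `i < as.length`. If `as.length = dim M`, this says that `M` is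
generalized Cohen–Macaulay and `as` is a system of parameters of `M`. -/
structure IsGenCMSystem (as : List R) (M : Type u) [AddCommGroup M] [Module R M] : Prop where
  mem_maximalIdeal : ∀ a ∈ as, a ∈ maximalIdeal R
  finiteHilbert : FiniteHilbert (Ideal.ofList as) M
  lcLength_lt_top : ∀ i < as.length, lcLength (maximalIdeal R) i M < ⊤

/-- The length of `Hⁱ(M)` as a natural number, and `0` if it is infinite. -/
noncomputable def lcNat (R : Type u) [CommRing R] [IsLocalRing R] (M : Type u) [AddCommGroup M]
    [Module R M] (i : ℕ) : ℕ :=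
  (lcLength (maximalIdeal R) i M).toNat

/-- The number `λ(M/qM) - ∑ᵢ C(d-1,i) λ(Hⁱ(M))` for `q = (as)` and `d = as.length`, a lower bound
for the multiplicity `e₀(q, M)`. Because of the truncated `d - 1` it is of use only for `d > 0`. -/
noncomputable def multiplicityBound (as : List R) (M : Type u) [AddCommGroup M] [Module R M] : ℤ :=
  hilbertFn (Ideal.ofList as) M 1 - binomSum (as.length - 1) (lcNat R M)

/-- `as` is a standard system of parameters of `M`: the multiplicity does not exceed
`multiplicityBound as M`. This is phrased through the growth of the Hilbert–Samuel function, so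
that no Hilbert–Samuel polynomial has to be known to exist. -/
def IsStandard (as : List R) (M : Type u) [AddCommGroup M] [Module R M] : Prop :=
  ¬ GrowthLB (hilbertFn (Ideal.ofList as) M) (as.length - 1) (multiplicityBound as M + 1)

section

variable {M : Type u} [AddCommGroup M] [Module R M] {a b : R} {as bs cs : List R}

lemma IsGenCMSystem.perm (h : IsGenCMSystem as M) (hp : as.Perm bs) : IsGenCMSystem bs M where
  mem_maximalIdeal b hb := h.mem_maximalIdeal b (hp.mem_iff.2 hb)
  finiteHilbert := ofList_eq_of_perm hp ▸ h.finiteHilbert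
  lcLength_lt_top := hp.length_eq ▸ h.lcLength_lt_top

lemma IsStandard.perm (h : IsStandard as M) (hp : as.Perm bs) : IsStandard bs M := by
  rwa [IsStandard, multiplicityBound, ← ofList_eq_of_perm hp, ← hp.length_eq]

namespace IsGenCMSystem

lemma coe_lcNat (h : IsGenCMSystem as M) {i : ℕ} (hi : i < as.length) :
    (lcNat R M i : ℕ∞) = lcLength (maximalIdeal R) i M :=
  ENat.natCast_toNat (h.lcLength_lt_top i hi).ne

lemma finiteHilbert_cons (h : IsGenCMSystem (a :: as) M) :
    FiniteHilbert (Ideal.span {a} ⊔ Ideal.ofList as) M :=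
  Ideal.ofList_cons a as ▸ h.finiteHilbert

variable [IsNoetherianRing R] [Module.Finite R M]

lemma torsionBy_le_H0 (h : IsGenCMSystem (a :: as) M) : Submodule.torsionBy R M a ≤ H0 R M :=
  _root_.torsionBy_le_H0 (fun c hc => h.mem_maximalIdeal c (List.mem_cons_of_mem _ hc))
    h.finiteHilbert fun i hi => h.lcLength_lt_top i (Nat.lt_succ_iff.2 hi)

lemma length_torsionBy_le (h : IsGenCMSystem (a :: as) M) :
    Module.length R (Submodule.torsionBy R M a) ≤ lcNat R M 0 := by
  rw [h.coe_lcNat (Nat.succ_pos _), lcLength_zero_eq_length_H0]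
  exact Module.length_le_of_injective _ (Submodule.inclusion_injective h.torsionBy_le_H0)

lemma length_torsionBy_lt_top (h : IsGenCMSystem (a :: as) M) :
    Module.length R (Submodule.torsionBy R M a) < ⊤ :=
  h.length_torsionBy_le.trans_lt (ENat.natCast_lt_top _)

lemma quotSMulTop (h : IsGenCMSystem (a :: as) M) : IsGenCMSystem as (QuotSMulTop a M) where
  mem_maximalIdeal c hc := h.mem_maximalIdeal c (List.mem_cons_of_mem _ hc)
  finiteHilbert := h.finiteHilbert_cons.quotSMulTop
  lcLength_lt_top i hi := (lcLength_quotSMulTop_le h.torsionBy_le_H0 i).trans_lt <|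
    ENat.add_lt_top.2 ⟨h.lcLength_lt_top i (Nat.lt_succ_of_lt hi),
      h.lcLength_lt_top (i + 1) (Nat.succ_lt_succ hi)⟩

lemma lcNat_quotSMulTop_le (h : IsGenCMSystem (a :: as) M) {i : ℕ} (hi : i < as.length) :
    lcNat R (QuotSMulTop a M) i ≤ lcNat R M i + lcNat R M (i + 1) := by
  rw [← Nat.cast_le (α := ℕ∞), Nat.cast_add, h.quotSMulTop.coe_lcNat hi,
    h.coe_lcNat (Nat.lt_succ_of_lt hi), h.coe_lcNat (Nat.succ_lt_succ hi)]
  exact lcLength_quotSMulTop_le h.torsionBy_le_H0 i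

lemma growthLB_cons_cons (h : IsGenCMSystem (a :: b :: cs) M) {c : ℤ}
    (hc : GrowthLB (hilbertFn (Ideal.ofList (b :: cs)) (QuotSMulTop a M)) cs.length c) :
    GrowthLB (hilbertFn (Ideal.ofList (a :: b :: cs)) M) (cs.length + 1) c := by
  obtain ⟨C, hC⟩ := h.finiteHilbert_cons.exists_sum_colonDefect_le
  rw [Ideal.ofList_cons]
  exact hc.of_forall_add_le (h.finiteHilbert_cons.hilbertFn_add_le h.length_torsionBy_lt_top) hC

lemma growthLB_singleton (h : IsGenCMSystem [a] M) :
    GrowthLB (hilbertFn (Ideal.ofList [a]) M) 0 (hilbertFn (Ideal.ofList [a]) M 1 -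
      (Module.length R (Submodule.torsionBy R M a)).toNat) := by
  obtain ⟨C, hC⟩ := h.finiteHilbert_cons.exists_sum_colonDefect_le
  have hstep := h.finiteHilbert_cons.hilbertFn_add_le h.length_torsionBy_lt_top
  simp only [Ideal.ofList_nil, hilbertFn_bot_succ, hilbertFn_quotSMulTop_one] at hstep
  simp only [Ideal.ofList_nil, List.length_nil, Nat.choose_zero_right, mul_one] at hC
  rw [Ideal.ofList_cons, Ideal.ofList_nil]
  exact .of_forall_add_const_le hstep hC

end IsGenCMSystem

lemma multiplicityBound_singleton :
    multiplicityBound [a] M = hilbertFn (Ideal.ofList [a]) M 1 - lcNat R M 0 := by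
  rw [multiplicityBound, List.length_singleton, Nat.sub_self, binomSum_zero]

lemma multiplicityBound_cons_cons_add :
    multiplicityBound (a :: b :: cs) M +
        binomSum cs.length (fun i => lcNat R M i + lcNat R M (i + 1)) =
      multiplicityBound (b :: cs) (QuotSMulTop a M) +
        binomSum cs.length (lcNat R (QuotSMulTop a M)) := by
  rw [multiplicityBound, multiplicityBound, hilbertFn_quotSMulTop_one, ← Ideal.ofList_cons]
  simp only [List.length_cons, Nat.add_sub_cancel, binomSum_succ, sub_add_cancel]

variable [IsNoetherianRing R] [Module.Finite R M]

lemma IsGenCMSystem.multiplicityBound_le (h : IsGenCMSystem (a :: b :: cs) M) :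
    multiplicityBound (a :: b :: cs) M ≤ multiplicityBound (b :: cs) (QuotSMulTop a M) := by
  have hsum : binomSum cs.length (lcNat R (QuotSMulTop a M)) ≤
      binomSum cs.length fun i => lcNat R M i + lcNat R M (i + 1) :=
    binomSum_le_binomSum fun i hi => h.lcNat_quotSMulTop_le (Nat.lt_succ_iff.2 hi)
  have := multiplicityBound_cons_cons_add (M := M) (a := a) (b := b) (cs := cs)
  lia

end

lemma IsGenCMSystem.growthLB_multiplicityBound [IsNoetherianRing R] {a : R} {as : List R}
    {M : Type u} [AddCommGroup M] [Module R M] [Module.Finite R M] (h : IsGenCMSystem (a :: as) M) :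
    GrowthLB (hilbertFn (Ideal.ofList (a :: as)) M) as.length (multiplicityBound (a :: as) M) := by
  induction as generalizing a M with
  | nil =>
    refine h.growthLB_singleton.mono ?_
    rw [multiplicityBound_singleton]
    have := ENat.toNat_le_of_le_natCast h.length_torsionBy_le
    lia
  | cons b cs ih => exact (h.growthLB_cons_cons (ih h.quotSMulTop)).mono h.multiplicityBound_le

namespace IsStandard

variable [IsNoetherianRing R] {M : Type u} [AddCommGroup M] [Module R M] [Module.Finite R M]
  {a b : R} {as cs : List R}

lemma multiplicityBound_eq (hs : IsStandard (a :: b :: cs) M) (h : IsGenCMSystem (a :: b :: cs) M) :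
    multiplicityBound (a :: b :: cs) M = multiplicityBound (b :: cs) (QuotSMulTop a M) := by
  refine le_antisymm h.multiplicityBound_le (not_lt.1 fun hlt => hs ?_)
  exact (h.growthLB_cons_cons h.quotSMulTop.growthLB_multiplicityBound).mono hlt

lemma quotSMulTop (hs : IsStandard (a :: b :: cs) M) (h : IsGenCMSystem (a :: b :: cs) M) :
    IsStandard (b :: cs) (QuotSMulTop a M) := fun hlb =>
  hs (hs.multiplicityBound_eq h ▸ h.growthLB_cons_cons hlb)

lemma lcNat_quotSMulTop_eq (hs : IsStandard (a :: b :: cs) M) (h : IsGenCMSystem (a :: b :: cs) M)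
    {i : ℕ} (hi : i ≤ cs.length) :
    lcNat R (QuotSMulTop a M) i = lcNat R M i + lcNat R M (i + 1) := by
  have hadd := multiplicityBound_cons_cons_add (M := M) (a := a) (b := b) (cs := cs)
  rw [hs.multiplicityBound_eq h, add_right_inj, Nat.cast_inj] at hadd
  exact eq_of_binomSum_le (fun i hi => h.lcNat_quotSMulTop_le (Nat.lt_succ_iff.2 hi)) hadd.le hi

lemma torsionBy_eq_H0_of_singleton (hs : IsStandard [a] M) (h : IsGenCMSystem [a] M) :
    Submodule.torsionBy R M a = H0 R M := by
  have hlen : lcNat R M 0 ≤ (Module.length R (Submodule.torsionBy R M a)).toNat := by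
    by_contra! hlt
    refine hs (h.growthLB_singleton.mono ?_)
    rw [multiplicityBound_singleton]
    lia
  by_contra hne
  have hlt : Module.length R (Submodule.torsionBy R M a) < Module.length R (H0 R M) := by
    rw [Module.length_submodule, Module.length_submodule]
    refine Order.height_strictMono (lt_of_le_of_ne h.torsionBy_le_H0 hne) ?_
    rw [← Module.length_submodule]
    exact h.length_torsionBy_lt_top
  rw [← lcLength_zero_eq_length_H0, ← h.coe_lcNat Nat.one_pos,
    ← ENat.natCast_toNat h.length_torsionBy_lt_top.ne, Nat.cast_lt] at hlt
  exact absurd hlen (not_le.2 hlt)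

lemma head_smul_eq_zero (hs : IsStandard (a :: as) M) (h : IsGenCMSystem (a :: as) M) {x : M}
    (hx : x ∈ H0 R M) : a • x = 0 := by
  rcases as with _ | ⟨b, cs⟩
  · rwa [← hs.torsionBy_eq_H0_of_singleton h] at hx
  · refine smul_eq_zero_of_mem_H0 h.torsionBy_le_H0 (h.lcLength_lt_top 0 (by simp))
      (h.lcLength_lt_top 1 (by simp)) ?_ hx
    rw [← h.coe_lcNat (by simp), ← h.coe_lcNat (by simp), ← h.quotSMulTop.coe_lcNat (by simp)]
    exact_mod_cast (hs.lcNat_quotSMulTop_eq h (Nat.zero_le _)).ge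

lemma smul_eq_zero (hs : IsStandard as M) (h : IsGenCMSystem as M) (hb : b ∈ as) {x : M}
    (hx : x ∈ H0 R M) : b • x = 0 := by
  classical
  have hp := List.perm_cons_erase hb
  exact (hs.perm hp).head_smul_eq_zero (h.perm hp) hx

end IsStandard

end GenCM

/-! ### Sequences of d-sequence type -/

section DSeq

open scoped Pointwise

variable {R : Type u} [CommRing R]

/-- A variant of Huneke's d-sequences: modulo the preceding terms, every element of `M` killed by
the square of a term `a` of the sequence is killed by `a` and by all terms after `a`. -/
def IsStandardDSeq : List R → ∀ (M : Type u) [AddCommGroup M] [Module R M], Prop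
  | [], _, _, _ => True
  | a :: as, M, _, _ =>
    (∀ x : M, a • a • x = 0 → ∀ b ∈ a :: as, b • x = 0) ∧ IsStandardDSeq as (QuotSMulTop a M)

lemma mem_ofList_cons_smul_top {M : Type u} [AddCommGroup M] [Module R M] {a : R} {as : List R}
    {x : M} : x ∈ (Ideal.ofList (a :: as) • ⊤ : Submodule R M) ↔
      (a • ⊤ : Submodule R M).mkQ x ∈ (Ideal.ofList as • ⊤ : Submodule R (QuotSMulTop a M)) := by
  have hmap : (Ideal.ofList as • ⊤ : Submodule R (QuotSMulTop a M)) =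
      (Ideal.ofList as • ⊤ : Submodule R M).map (a • ⊤ : Submodule R M).mkQ := by
    rw [Submodule.map_smul'', Submodule.map_top, Submodule.range_mkQ]
  rw [hmap, ← Submodule.mem_comap, Submodule.comap_map_eq, Submodule.ker_mkQ, Ideal.ofList_cons,
    Submodule.sup_smul, Submodule.ideal_span_singleton_smul, sup_comm]

namespace IsStandardDSeq

variable {M : Type u} [AddCommGroup M] [Module R M] {a c : R} {as bs cs : List R} {x : M}

lemma eq_zero_of_mem_smul_top (h : IsStandardDSeq as M)
    (hx : x ∈ (Ideal.ofList as • ⊤ : Submodule R M)) (has : ∀ a ∈ as, a • x = 0) : x = 0 := by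
  induction as generalizing M with
  | nil => simpa using hx
  | cons a as ih =>
    have hmk : (a • ⊤ : Submodule R M).mkQ x = 0 :=
      ih h.2 (mem_ofList_cons_smul_top.1 hx) fun b hb => by
        rw [← map_smul, has b (List.mem_cons_of_mem _ hb), map_zero]
    obtain ⟨y, -, rfl⟩ := (Submodule.Quotient.mk_eq_zero _).1 hmk
    exact h.1 y (has a List.mem_cons_self) a List.mem_cons_self

lemma eq_zero_of_head_smul_eq_zero (h : IsStandardDSeq (a :: as) M)
    (hx : x ∈ (Ideal.ofList (a :: as) • ⊤ : Submodule R M)) (hax : a • x = 0) : x = 0 :=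
  h.eq_zero_of_mem_smul_top hx (h.1 x (by rw [hax, smul_zero]))

lemma mem_smul_top_of_smul_mem (h : IsStandardDSeq (bs ++ c :: cs) M)
    (hx : x ∈ (Ideal.ofList (bs ++ c :: cs) • ⊤ : Submodule R M))
    (hcx : c • x ∈ (Ideal.ofList bs • ⊤ : Submodule R M)) :
    x ∈ (Ideal.ofList bs • ⊤ : Submodule R M) := by
  induction bs generalizing M with
  | nil =>
    rw [Ideal.ofList_nil, Submodule.bot_smul, Submodule.mem_bot] at hcx ⊢
    exact h.eq_zero_of_head_smul_eq_zero hx hcx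
  | cons b bs ih =>
    rw [List.cons_append, mem_ofList_cons_smul_top] at hx
    rw [mem_ofList_cons_smul_top] at hcx ⊢
    exact ih h.2 hx (by rwa [← map_smul])

lemma smul_top_inf_pow_smul_top_le (h : IsStandardDSeq (bs ++ cs) M) (n : ℕ) :
    (Ideal.ofList bs • ⊤ ⊓ Ideal.ofList (bs ++ cs) ^ (n + 1) • ⊤ : Submodule R M) ≤
      Ideal.ofList bs • Ideal.ofList (bs ++ cs) ^ n • ⊤ := by
  induction n generalizing bs cs with
  | zero => simp
  | succ n ihn =>
    induction cs generalizing bs with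
    | nil =>
      rw [List.append_nil, pow_succ' _ (n + 1), Submodule.mul_smul]
      exact inf_le_right
    | cons c cs ih =>
      rintro x ⟨hxbs, hx⟩
      have hassoc : bs ++ c :: cs = bs ++ [c] ++ cs := by simp
      have hxc : x ∈ (Ideal.ofList (bs ++ [c]) • Ideal.ofList (bs ++ c :: cs) ^ (n + 1) • ⊤ :
          Submodule R M) := by
        rw [hassoc] at h hx ⊢
        refine ih h ⟨Submodule.smul_mono_left ?_ hxbs, hx⟩
        exact (Ideal.ofList_append bs [c]).symm ▸ le_sup_left
      rw [Ideal.ofList_append, Submodule.sup_smul, Ideal.ofList_singleton,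
        Submodule.ideal_span_singleton_smul] at hxc
      obtain ⟨y, hy, _, ⟨z, hz, rfl⟩, rfl⟩ := Submodule.mem_sup.1 hxc
      refine Submodule.add_mem _ hy ?_
      have hcz : c • z ∈ (Ideal.ofList bs • ⊤ : Submodule R M) :=
        (Submodule.add_mem_iff_right _ (Submodule.smul_mono le_rfl le_top hy)).1 hxbs
      have hzbs : z ∈ (Ideal.ofList bs • ⊤ : Submodule R M) :=
        h.mem_smul_top_of_smul_mem (Submodule.smul_mono_left (Ideal.pow_le_self n.succ_ne_zero) hz)
          hcz
      have hc : c ∈ Ideal.ofList (bs ++ c :: cs) := Ideal.subset_span (by simp)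
      have hcz' := Submodule.smul_mem_smul hc (ihn h ⟨hzbs, hz⟩)
      rwa [← Submodule.mul_smul, mul_comm, Submodule.mul_smul, ← Submodule.mul_smul _ _ ⊤,
        ← pow_succ'] at hcz'

lemma colonDefect_eq_zero (h : IsStandardDSeq (a :: as) M) (n : ℕ) :
    colonDefect a (Ideal.ofList (a :: as)) M n = 0 := by
  rw [colonDefect, Module.length_eq_zero_iff, Submodule.subsingleton_iff_eq_bot, ← le_bot_iff,
    Submodule.map_le_iff_le_comap, Submodule.comap_bot, Submodule.ker_mkQ]
  intro x hx
  have hax : a • x ∈ (Ideal.ofList [a] • Ideal.ofList (a :: as) ^ n • ⊤ : Submodule R M) :=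
    smul_top_inf_pow_smul_top_le (bs := [a]) (cs := as) h n
      ⟨Submodule.smul_mem_smul (Ideal.subset_span (by simp)) trivial, hx⟩
  rw [Ideal.ofList_singleton, Submodule.ideal_span_singleton_smul] at hax
  obtain ⟨y, hy, hxy⟩ := hax
  rw [← sub_add_cancel x y]
  refine Submodule.add_mem_sup ?_ hy
  rw [Submodule.mem_torsionBy_iff, smul_sub, sub_eq_zero]
  exact hxy.symm

lemma length_map_mkQ_torsionBy (h : IsStandardDSeq (a :: as) M) (n : ℕ) :
    Module.length R ((Submodule.torsionBy R M a).map
      (Ideal.ofList (a :: as) ^ (n + 1) • ⊤ : Submodule R M).mkQ) =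
      Module.length R (Submodule.torsionBy R M a) := by
  set f := (Ideal.ofList (a :: as) ^ (n + 1) • ⊤ : Submodule R M).mkQ.submoduleMap
    (Submodule.torsionBy R M a)
  have hinj : Injective f := by
    refine (injective_iff_map_eq_zero f).2 fun ⟨x, hx⟩ hfx => Subtype.ext ?_
    have hxq : x ∈ (Ideal.ofList (a :: as) ^ (n + 1) • ⊤ : Submodule R M) :=
      (Submodule.Quotient.mk_eq_zero _).1 (congrArg Subtype.val hfx)
    exact h.eq_zero_of_head_smul_eq_zero
      (Submodule.smul_mono_left (Ideal.pow_le_self n.succ_ne_zero) hxq) hx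
  exact (LinearEquiv.ofBijective f ⟨hinj, LinearMap.submoduleMap_surjective _ _⟩).length_eq.symm

end IsStandardDSeq

end DSeq

/-! ### The Hilbert–Samuel function of a standard system of parameters -/

section StandardHilbert

variable {R : Type u} [CommRing R] [IsLocalRing R]

/-- The coefficients, with respect to the binomials `C(n+k,k)`, of the Hilbert–Samuel polynomial
`λ(M / qⁿ⁺¹M)` of a standard system of parameters `as`, where `q = (as)`. -/
noncomputable def standardHilbertCoeff (as : List R) (M : Type u) [AddCommGroup M] [Module R M]
    (k : ℕ) : ℤ :=
  if k < as.length then standardCoeff (lcNat R M) k else multiplicityBound as M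

variable [IsNoetherianRing R] {M : Type u} [AddCommGroup M] [Module R M] [Module.Finite R M]
  {a b : R} {as cs : List R}

lemma IsGenCMSystem.mem_H0_of_smul_mem_H0 (h : IsGenCMSystem (a :: as) M) {x : M}
    (hx : a • x ∈ H0 R M) : x ∈ H0 R M := by
  obtain ⟨n, hn⟩ := mem_H0.1 hx
  exact mem_H0_of_pow_smul_mem fun r hr =>
    h.torsionBy_le_H0 ((smul_comm a r x).trans (hn r hr))

lemma IsStandard.isStandardDSeq (hs : IsStandard as M) (h : IsGenCMSystem as M) :
    IsStandardDSeq as M := by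
  induction as generalizing M with
  | nil => trivial
  | cons a as ih =>
    refine ⟨fun x hx b hb => ?_, ?_⟩
    · exact hs.smul_eq_zero h hb (h.mem_H0_of_smul_mem_H0 (h.torsionBy_le_H0 hx))
    · rcases as with _ | ⟨b, cs⟩
      · trivial
      · exact ih (hs.quotSMulTop h) h.quotSMulTop

lemma IsStandard.hilbertFn_add_lcNat (hs : IsStandard (a :: as) M) (h : IsGenCMSystem (a :: as) M)
    (n : ℕ) :
    hilbertFn (Ideal.ofList (a :: as)) M (n + 2) + lcNat R M 0 =
      hilbertFn (Ideal.ofList (a :: as)) M (n + 1) +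
        hilbertFn (Ideal.ofList as) (QuotSMulTop a M) (n + 2) := by
  have hds := hs.isStandardDSeq h
  have htorsion : Submodule.torsionBy R M a = H0 R M :=
    le_antisymm h.torsionBy_le_H0 fun x hx => hs.head_smul_eq_zero h hx
  have hsucc := length_quotient_pow_succ_eq (M := M) a (Ideal.ofList as) (n + 1)
  have hcolon :=
    length_quotient_pow_eq (M := M) (mem_span_singleton_sup a (Ideal.ofList as)) (n + 1)
  rw [← Ideal.ofList_cons] at hsucc hcolon
  rw [hds.colonDefect_eq_zero, hds.length_map_mkQ_torsionBy, htorsion,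
    ← lcLength_zero_eq_length_H0] at hcolon
  rw [← Nat.cast_inj (R := ℕ∞), Nat.cast_add, Nat.cast_add, h.finiteHilbert.coe_hilbertFn,
    h.finiteHilbert.coe_hilbertFn, h.quotSMulTop.finiteHilbert.coe_hilbertFn,
    h.coe_lcNat (Nat.succ_pos _), hsucc, hcolon]
  ring

lemma IsStandard.standardHilbertCoeff_quotSMulTop_zero (hs : IsStandard (a :: b :: cs) M)
    (h : IsGenCMSystem (a :: b :: cs) M) :
    standardHilbertCoeff (b :: cs) (QuotSMulTop a M) 0 =
      standardHilbertCoeff (a :: b :: cs) M 0 + standardHilbertCoeff (a :: b :: cs) M 1 := by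
  simp [standardHilbertCoeff, standardCoeff, binomSum_zero,
    hs.lcNat_quotSMulTop_eq h (Nat.zero_le _)]

lemma IsStandard.standardHilbertCoeff_quotSMulTop_succ (hs : IsStandard (a :: b :: cs) M)
    (h : IsGenCMSystem (a :: b :: cs) M) (k : ℕ) :
    standardHilbertCoeff (b :: cs) (QuotSMulTop a M) (k + 1) =
      standardHilbertCoeff (a :: b :: cs) M (k + 2) := by
  simp only [standardHilbertCoeff, List.length_cons, add_lt_add_iff_right]
  split_ifs with hk
  · refine congrArg Nat.cast (standardCoeff_succ_eq fun i hi => ?_)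
    exact hs.lcNat_quotSMulTop_eq h (by lia)
  · exact (hs.multiplicityBound_eq h).symm

lemma IsStandard.hilbertFn_succ_eq_binPoly_of_quotSMulTop (hs : IsStandard (a :: as) M)
    (h : IsGenCMSystem (a :: as) M) {t : ℕ → ℤ}
    (ht : ∀ n, (hilbertFn (Ideal.ofList as) (QuotSMulTop a M) (n + 1) : ℤ) = binPoly as.length t n)
    (ht0 : t 0 = standardHilbertCoeff (a :: as) M 0 + standardHilbertCoeff (a :: as) M 1)
    (ht_succ : ∀ k < as.length, t (k + 1) = standardHilbertCoeff (a :: as) M (k + 2)) (n : ℕ) :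
    (hilbertFn (Ideal.ofList (a :: as)) M (n + 1) : ℤ) =
      binPoly (as.length + 1) (standardHilbertCoeff (a :: as) M) n := by
  have hzero : standardHilbertCoeff (a :: as) M 0 = lcNat R M 0 := if_pos (Nat.succ_pos _)
  refine eq_binPoly_of_recursion (F := fun n => hilbertFn (Ideal.ofList (a :: as)) M n)
    (G := fun n => hilbertFn (Ideal.ofList as) (QuotSMulTop a M) n) ?_ (fun n => ?_) ht ht0
    ht_succ n
  · rw [hilbertFn_quotSMulTop_one, Ideal.ofList_cons]
  · rw [hzero]
    exact_mod_cast hs.hilbertFn_add_lcNat h n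

lemma IsStandard.hilbertFn_succ_eq_binPoly (hs : IsStandard (a :: as) M)
    (h : IsGenCMSystem (a :: as) M) (n : ℕ) :
    (hilbertFn (Ideal.ofList (a :: as)) M (n + 1) : ℤ) =
      binPoly (as.length + 1) (standardHilbertCoeff (a :: as) M) n := by
  induction as generalizing a M n with
  | nil =>
    refine hs.hilbertFn_succ_eq_binPoly_of_quotSMulTop h
      (t := fun _ => hilbertFn (Ideal.ofList [a]) M 1) (fun n => ?_) ?_ (by simp) n
    · rw [List.length_nil, binPoly_zero_left, Ideal.ofList_cons, ← hilbertFn_quotSMulTop_one,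
        Ideal.ofList_nil, hilbertFn_bot_succ]
    · simp [standardHilbertCoeff, standardCoeff, multiplicityBound_singleton]
  | cons b cs ih =>
    exact hs.hilbertFn_succ_eq_binPoly_of_quotSMulTop h
      (fun n => ih (hs.quotSMulTop h) h.quotSMulTop n)
      (hs.standardHilbertCoeff_quotSMulTop_zero h)
      (fun k _ => hs.standardHilbertCoeff_quotSMulTop_succ h k) n

end StandardHilbert

/-! ### Hilbert coefficients of standard parameter ideals -/

section HilbertCoeffs

variable {R : Type u} [CommRing R] {M : Type u} [AddCommGroup M] [Module R M] {I : Ideal R} {d : ℕ}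
  {e : ℕ → ℤ}

lemma length_eq_of_mlen_eq {m : ℕ} (h : mlen R M = ((m : ℕ∞) : WithBot ℕ∞)) :
    Module.length R M = m :=
  WithBot.coe_injective ((Module.coe_length R M).trans h)

lemma hilbertFn_one_eq_of_mlen_eq {m : ℕ}
    (h : mlen R (M ⧸ (I • ⊤ : Submodule R M)) = ((m : ℕ∞) : WithBot ℕ∞)) :
    hilbertFn I M 1 = m := by
  rw [hilbertFn, pow_one, length_eq_of_mlen_eq h, ENat.toNat_natCast]

lemma hilbertFn_top (n : ℕ) : hilbertFn (⊤ : Ideal R) M n = 0 := by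
  have : Subsingleton (M ⧸ ((⊤ : Ideal R) ^ n • ⊤ : Submodule R M)) := by
    rw [Submodule.Quotient.subsingleton_iff, Ideal.top_pow, Submodule.top_smul]
  rw [hilbertFn, Module.length_eq_zero, ENat.toNat_zero]

namespace HasHilbCoeffs

lemma finiteHilbert (he : HasHilbCoeffs R I M d e) : FiniteHilbert I M := by
  obtain ⟨ℓ, hℓ, -⟩ := he
  exact fun n => length_eq_of_mlen_eq (hℓ n) ▸ ENat.natCast_lt_top _

lemma eventually_hilbertFn_succ_eq (he : HasHilbCoeffs R I M d e) :
    ∀ᶠ n in atTop, (hilbertFn I M (n + 1) : ℤ) =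
      binPoly d (fun k => (-1) ^ (d - k) * e (d - k)) n := by
  obtain ⟨ℓ, hℓ, hpoly⟩ := he
  filter_upwards [(tendsto_add_atTop_nat 1).eventually hpoly] with n hn
  rw [hilbertFn, length_eq_of_mlen_eq (hℓ (n + 1)), ENat.toNat_natCast, hn, hsPoly_succ]

lemma coeff_eq_of_eq_binPoly (he : HasHilbCoeffs R I M d e) {c : ℕ → ℤ}
    (hc : ∀ n, (hilbertFn I M (n + 1) : ℤ) = binPoly d c n) {i : ℕ} (hi : i ≤ d) :
    e (d - i) = (-1) ^ (d - i) * c i := by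
  have hci : (-1) ^ (d - i) * e (d - i) = c i :=
    eq_of_eventually_binPoly_eq (he.eventually_hilbertFn_succ_eq.mono fun n hn =>
      hn.symm.trans (hc n)) hi
  rw [← hci, ← mul_assoc, ← mul_pow, neg_one_mul, neg_neg, one_pow, one_mul]

lemma coeff_eq_zero_of_top (he : HasHilbCoeffs R ⊤ M d e) {i : ℕ} (hi : i ≤ d) :
    e (d - i) = 0 := by
  have hzero := he.coeff_eq_of_eq_binPoly (c := 0) (fun n => by simp [hilbertFn_top, binPoly]) hi
  rwa [Pi.zero_apply, mul_zero] at hzero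

variable [IsLocalRing R] {a : R} {as : List R}

lemma isStandard (he : HasHilbCoeffs R (Ideal.ofList (a :: as)) M (as.length + 1) e)
    (he0 : multiplicityBound (a :: as) M = e 0) : IsStandard (a :: as) M := by
  have hgrowth := not_growthLB_of_eventually_eq_binPoly he.eventually_hilbertFn_succ_eq
  rwa [Nat.sub_self, pow_zero, one_mul, ← he0] at hgrowth

lemma coeff_eq_of_isStandard [IsNoetherianRing R] [Module.Finite R M]
    (he : HasHilbCoeffs R (Ideal.ofList (a :: as)) M (as.length + 1) e)
    (h : IsGenCMSystem (a :: as) M) (hs : IsStandard (a :: as) M) {i : ℕ} (hi : i ≤ as.length) :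
    e (as.length + 1 - i) = (-1) ^ (as.length + 1 - i) * standardCoeff (lcNat R M) i := by
  rw [he.coeff_eq_of_eq_binPoly (hs.hilbertFn_succ_eq_binPoly h) (Nat.le_succ_of_le hi),
    standardHilbertCoeff, List.length_cons, if_pos (Nat.lt_succ_of_le hi)]

end HasHilbCoeffs

end HilbertCoeffs

section ParameterIdeal

lemma exists_ofList_cons_eq_span_range {R : Type u} [CommRing R] {D : ℕ} (a : Fin (D + 1) → R) :
    ∃ b as, as.length = D ∧ Ideal.ofList (b :: as) = Ideal.span (Set.range a) := by
  refine ⟨a 0, List.ofFn fun i : Fin D => a i.succ, List.length_ofFn, ?_⟩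
  rw [← List.ofFn_succ, Ideal.ofList]
  exact congrArg Ideal.span (Set.ext fun x => List.mem_ofFn)

lemma HasHilbCoeffs.coeff_eq_standardCoeff_of_top {R : Type u} [CommRing R] {M : Type u}
    [AddCommGroup M] [Module R M] {D : ℕ} {e : ℕ → ℤ} {h : ℕ → ℕ}
    (he : HasHilbCoeffs R ⊤ M (D + 1) e)
    (hstd : (hilbertFn (⊤ : Ideal R) M 1 : ℤ) - e 0 = binomSum D h) {i : ℕ} (hi : i ≤ D) :
    e (D + 1 - i) = (-1) ^ (D + 1 - i) * standardCoeff h i := by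
  have he0 : e 0 = 0 := Nat.sub_self (D + 1) ▸ he.coeff_eq_zero_of_top le_rfl
  rw [hilbertFn_top, he0, Nat.cast_zero, sub_zero] at hstd
  have hzero : standardCoeff h i = 0 := by
    rw [standardCoeff_eq_sum_bin]
    refine Finset.sum_eq_zero fun j hj => ?_
    rw [eq_zero_of_binomSum_eq_zero (Nat.cast_eq_zero.1 hstd.symm)
      ((Finset.mem_range_succ_iff.1 hj).trans hi), mul_zero]
  rw [he.coeff_eq_zero_of_top (Nat.le_succ_of_le hi), hzero, Nat.cast_zero, mul_zero]

variable {R : Type u} [CommRing R] [IsLocalRing R] [IsNoetherianRing R] {M : Type u}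
  [AddCommGroup M] [Module R M] [Module.Finite R M] {e : ℕ → ℤ} {h : ℕ → ℕ}

lemma HasHilbCoeffs.coeff_eq_standardCoeff_of_ne_top {a : R} {as : List R}
    (he : HasHilbCoeffs R (Ideal.ofList (a :: as)) M (as.length + 1) e)
    (htop : Ideal.ofList (a :: as) ≠ ⊤)
    (hh : ∀ i < as.length + 1, mlen R (lcoh R i M) = ((h i : ℕ∞) : WithBot ℕ∞))
    (hstd : (hilbertFn (Ideal.ofList (a :: as)) M 1 : ℤ) - e 0 = binomSum as.length h) {i : ℕ}
    (hi : i ≤ as.length) :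
    e (as.length + 1 - i) = (-1) ^ (as.length + 1 - i) * standardCoeff h i := by
  have hlc : ∀ j < as.length + 1, lcLength (maximalIdeal R) j M = h j := fun j hj =>
    WithBot.coe_injective ((mlen_lcoh j M).symm.trans (hh j hj))
  have hlcNat : ∀ j ≤ as.length, lcNat R M j = h j := fun j hj => by
    rw [lcNat, hlc j (Nat.lt_succ_of_le hj), ENat.toNat_natCast]
  have hsys : IsGenCMSystem (a :: as) M :=
    ⟨fun b hb => le_maximalIdeal htop (Ideal.subset_span hb), he.finiteHilbert,
      fun j hj => hlc j hj ▸ ENat.natCast_lt_top _⟩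
  have he0 : multiplicityBound (a :: as) M = e 0 := by
    rw [multiplicityBound, List.length_cons, Nat.add_sub_cancel, binomSum_congr hlcNat, ← hstd,
      sub_sub_cancel]
  rw [he.coeff_eq_of_isStandard hsys (he.isStandard he0) hi,
    standardCoeff_congr fun j hj => hlcNat j (hj.trans hi)]

theorem stmt_10_general {d : ℕ}
    (hh : ∀ i, i < d → mlen R (lcoh R i M) = ((h i : ℕ∞) : WithBot ℕ∞))
    {I : Ideal R} (hpar : IsParameterIdeal R I d M) (he : HasHilbCoeffs R I M d e) {l1 : ℕ}
    (hl1 : mlen R (M ⧸ (I • (⊤ : Submodule R M))) = ((l1 : ℕ∞) : WithBot ℕ∞))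
    (hstd : (l1 : ℤ) - e 0 = ∑ i ∈ Finset.range d, ((d - 1).choose i : ℤ) * (h i : ℤ)) {i : ℕ}
    (hi : i < d) :
    e (d - i) = (-1 : ℤ) ^ (d - i) *
      ∑ j ∈ Finset.range (i + 1), (bin i j : ℤ) * (h j : ℤ) := by
  obtain ⟨D, rfl⟩ : ∃ D, d = D + 1 := Nat.exists_eq_add_one_of_ne_zero (Nat.ne_zero_of_lt hi)
  have hiD : i ≤ D := Nat.le_of_lt_succ hi
  have hstd' : (hilbertFn I M 1 : ℤ) - e 0 = binomSum D h := by
    rw [hilbertFn_one_eq_of_mlen_eq hl1, hstd, binomSum]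
    push_cast
    rfl
  suffices hcoeff : e (D + 1 - i) = (-1) ^ (D + 1 - i) * standardCoeff h i by
    rw [hcoeff, standardCoeff_eq_sum_bin]
    push_cast
    rfl
  by_cases htop : I = ⊤
  · subst htop
    exact he.coeff_eq_standardCoeff_of_top hstd' hiD
  · obtain ⟨⟨a, rfl⟩, -⟩ := hpar
    obtain ⟨b, as, rfl, has⟩ := exists_ofList_cons_eq_span_range a
    rw [← has] at he htop hstd'
    exact he.coeff_eq_standardCoeff_of_ne_top htop hh hstd' hiD

end ParameterIdeal

/-- **Schenzel.** In a generalized Cohen–Macaulay local ring of dimension `d`, for an ideal `I`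
generated by a standard system of parameters, `e_{d-i}(I) = (-1)^{d-i} ∑_{j=0}^{i} C(i-1,j-1)
λ(Hʲ_m(R))` for `0 ≤ i ≤ d-1`. -/
theorem stmt_10 (R : Type u) [CommRing R] [IsLocalRing R] [IsNoetherianRing R]
    (d : ℕ) (hd : ringKrullDim R = ((d : ℕ∞) : WithBot ℕ∞))
    (h : ℕ → ℕ)
    (hh : ∀ i, i < d → mlen R (lcoh R i R) = ((h i : ℕ∞) : WithBot ℕ∞))
    (I : Ideal R) (hpar : IsParameterIdeal R I d R)
    (e : ℕ → ℤ) (he : HasHilbCoeffs R I R d e)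
    (l1 : ℕ) (hl1 : mlen R (R ⧸ (I • (⊤ : Submodule R R))) = ((l1 : ℕ∞) : WithBot ℕ∞))
    (hstd : (l1 : ℤ) - e 0 = ∑ i ∈ Finset.range d, ((d - 1).choose i : ℤ) * (h i : ℤ)) :
    ∀ i, i < d →
      e (d - i) = (-1 : ℤ) ^ (d - i) *
        ∑ j ∈ Finset.range (i + 1), (bin i j : ℤ) * (h j : ℤ) := by
  intro i hi
  exact stmt_10_general hh hpar he hl1 hstd hi
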